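/- arXiv:2605.17157 — 9 statements merged into one kernel-verified Lean document; each statement's English description precedes it below -/
import Mathlib

section
/- The involution (x,y) ↦ (−r₁−y, −r₁−x) maps D(p,u) bijectively onto D′(p,u) and maps D′(p,u) bijectively onto D(p,u). Consequently, {b − a : (a,b) ∈ D(p,u)} = {b − a : (a,b) ∈ D′(p,u)}. -/
/-!
Since `u * r₁ ≡ 1` modulo `p`, reflecting `x` to `-r₁ - x` turns `u * x` into `-1 - u * x`, so it
replaces the residue `t` by `p - 1 - t`. The reflection thus reverses both the order of the integers
and the order of their residues, which exchanges conditions (4) and (5).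
-/

section Reflection

variable {α β : Type*} [LinearOrder β]

/-- The pair `(a, b)` satisfies condition (4) for the function `f`: both endpoint values lie
strictly below all values in between. Pairs `a < b` with nothing in between qualify. -/
def IsLowPair [LT α] (f : α → β) (a b : α) : Prop :=
  a < b ∧ ∀ n, a < n → n < b → max (f a) (f b) < f n

/-- The pair `(a, b)` satisfies condition (5) for the function `f`: both endpoint values lie
strictly above all values in between. Pairs `a < b` with nothing in between qualify. -/
def IsHighPair [LT α] (f : α → β) (a b : α) : Prop :=
  a < b ∧ ∀ n, a < n → n < b → f n < min (f a) (f b)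

variable [AddCommGroup α] [PartialOrder α] [IsOrderedAddMonoid α] {f : α → β} {c : α}

theorem isLowPair_iff_isHighPair_reflect (hf : ∀ x y, f (c - x) < f (c - y) ↔ f y < f x) (a b : α) :
    IsLowPair f a b ↔ IsHighPair f (c - b) (c - a) := by
  refine and_congr (sub_lt_sub_iff_left c).symm ((Equiv.subLeft c).forall_congr fun n => ?_)
  simp only [Equiv.subLeft_apply, sub_lt_sub_iff_left, max_lt_iff, lt_min_iff, hf]
  tauto

theorem isHighPair_iff_isLowPair_reflect (hf : ∀ x y, f (c - x) < f (c - y) ↔ f y < f x) (a b : α) :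
    IsHighPair f a b ↔ IsLowPair f (c - b) (c - a) := by
  simp only [isLowPair_iff_isHighPair_reflect hf, sub_sub_cancel]

theorem setOf_sub_isLowPair_eq_setOf_sub_isHighPair
    (hf : ∀ x y, f (c - x) < f (c - y) ↔ f y < f x) :
    {d | ∃ a b, IsLowPair f a b ∧ d = b - a} = {d | ∃ a b, IsHighPair f a b ∧ d = b - a} := by
  ext d
  constructor
  · rintro ⟨a, b, hab, rfl⟩
    exact ⟨c - b, c - a, (isLowPair_iff_isHighPair_reflect hf a b).1 hab,
      (sub_sub_sub_cancel_left a b c).symm⟩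
  · rintro ⟨a, b, hab, rfl⟩
    exact ⟨c - b, c - a, (isHighPair_iff_isLowPair_reflect hf a b).1 hab,
      (sub_sub_sub_cancel_left a b c).symm⟩

end Reflection

section Residues

variable {p u r : ℤ}

theorem neg_one_sub_emod (hp : 0 < p) (t : ℤ) : (-1 - t) % p = p - 1 - t % p := by
  have residue_nonneg : 0 ≤ t % p := Int.emod_nonneg t hp.ne'
  have residue_lt : t % p < p := Int.emod_lt_of_pos t hp
  have congruent : -1 - t ≡ p - 1 - t % p [ZMOD p] :=
    Int.modEq_iff_dvd.2 ⟨t / p + 1, by linear_combination -Int.emod_add_mul_ediv t p⟩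
  exact congruent.eq.trans (Int.emod_eq_of_lt (by omega) (by omega))

theorem mul_neg_sub_emod (hp : 0 < p) (hur : u * r ≡ 1 [ZMOD p]) (x : ℤ) :
    (u * (-r - x)) % p = p - 1 - (u * x) % p := by
  have congruent : u * (-r - x) ≡ -1 - u * x [ZMOD p] := by
    simpa only [mul_sub, mul_neg] using hur.neg.sub_right (u * x)
  rw [congruent.eq, neg_one_sub_emod hp]

theorem mul_neg_sub_emod_lt_iff (hp : 0 < p) (hur : u * r ≡ 1 [ZMOD p]) (x y : ℤ) :
    (u * (-r - x)) % p < (u * (-r - y)) % p ↔ (u * y) % p < (u * x) % p := by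
  rw [mul_neg_sub_emod hp hur, mul_neg_sub_emod hp hur, sub_lt_sub_iff_left]

end Residues

/-- Lemma 1: the involution `(x, y) ↦ (-r₁-y, -r₁-x)` maps the set `D(p,u)` of pairs
satisfying condition (4) bijectively onto the set `D'(p,u)` of pairs satisfying
condition (5), and vice versa; consequently the two difference sets coincide. -/
theorem stmt_0 (p u r1 : ℤ) (hp : 3 ≤ p) (hpu : IsCoprime u p)
    (hr1pos : 0 < r1) (hr1lt : r1 < p) (hur1 : (u * r1) % p = 1) :
    (∀ a b : ℤ,
      (a < b ∧ ∀ n : ℤ, a < n → n < b →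
          max ((u * a) % p) ((u * b) % p) < (u * n) % p) ↔
      ((-r1 - b) < (-r1 - a) ∧ ∀ n : ℤ, (-r1 - b) < n → n < (-r1 - a) →
          (u * n) % p < min ((u * (-r1 - b)) % p) ((u * (-r1 - a)) % p))) ∧
    (∀ a b : ℤ,
      (a < b ∧ ∀ n : ℤ, a < n → n < b →
          (u * n) % p < min ((u * a) % p) ((u * b) % p)) ↔
      ((-r1 - b) < (-r1 - a) ∧ ∀ n : ℤ, (-r1 - b) < n → n < (-r1 - a) →
          max ((u * (-r1 - b)) % p) ((u * (-r1 - a)) % p) < (u * n) % p)) ∧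
    {d : ℤ | ∃ a b : ℤ, (a < b ∧ ∀ n : ℤ, a < n → n < b →
        max ((u * a) % p) ((u * b) % p) < (u * n) % p) ∧ d = b - a} =
    {d : ℤ | ∃ a b : ℤ, (a < b ∧ ∀ n : ℤ, a < n → n < b →
        (u * n) % p < min ((u * a) % p) ((u * b) % p)) ∧ d = b - a} := by
  have hp_pos : 0 < p := by omega
  have hur : u * r1 ≡ 1 [ZMOD p] := hur1.trans (Int.emod_eq_of_lt one_pos.le (by omega)).symm
  have residue_reversed := mul_neg_sub_emod_lt_iff hp_pos hur
  exact ⟨isLowPair_iff_isHighPair_reflect (f := fun x => (u * x) % p) residue_reversed,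
    isHighPair_iff_isLowPair_reflect (f := fun x => (u * x) % p) residue_reversed,
    setOf_sub_isLowPair_eq_setOf_sub_isHighPair (f := fun x => (u * x) % p) residue_reversed⟩
end

section
/- For every tuple z ∈ 𝒵 other than the zero tuple, 0 < R(z) < p; and R of the zero tuple equals 0. -/
/-!
Grouping the alternating sum in pairs gives the upper bound: with `S k` the alternating sum of
`z i • r i` over `k ≤ i ≤ t`, discarding `- z (k + 2) • r (k + 2)` leaves
`S (k + 1) ≤ Z (k + 1) • r (k + 1) + S (k + 3)`, so `S (k + 3) < r (k + 2)` yields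
`S (k + 1) < r k`. Two steps of the algorithm are thus consumed at a time, and the stricter bound on
the last digit is what starts the induction. The same bound makes the first nonzero term
`z k • r k ≥ r k` outweigh the rest `S (k + 1)`, and since `k` is odd that term enters positively.
-/

open Finset

section AlternatingSum

variable {G : Type*} [AddCommGroup G]

/-- The alternating sum `a k - a (k + 1) + a (k + 2) - ⋯ ± a t`. The sign is normalized so that the
first term is counted positively, whatever the parity of `k`. -/
def alternatingSum (a : ℕ → G) (k t : ℕ) : G :=
  ∑ i ∈ Icc k t, (-1 : ℤ) ^ (i - k) • a i

lemma alternatingSum_of_lt (a : ℕ → G) {k t : ℕ} (htk : t < k) : alternatingSum a k t = 0 := by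
  rw [alternatingSum, Icc_eq_empty_of_lt htk, sum_empty]

lemma alternatingSum_eq_neg_one_pow_smul {a : ℕ → G} {m k : ℕ} (hmk : m ≤ k)
    (ha : ∀ j, m ≤ j → j < k → a j = 0) (t : ℕ) :
    alternatingSum a m t = (-1 : ℤ) ^ (k - m) • alternatingSum a k t := by
  have drop_zeros : ∑ i ∈ Icc k t, (-1 : ℤ) ^ (i - m) • a i = alternatingSum a m t := by
    refine sum_subset (Icc_subset_Icc_left hmk) fun i hi hik ↦ ?_
    rw [mem_Icc] at hi hik
    rw [ha i hi.1 (by lia), smul_zero]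
  rw [← drop_zeros, alternatingSum, smul_sum]
  refine sum_congr rfl fun i hi ↦ ?_
  rw [mem_Icc] at hi
  rw [smul_smul, ← pow_add, show k - m + (i - k) = i - m by lia]

lemma alternatingSum_eq_sub (a : ℕ → G) {k t : ℕ} (hkt : k ≤ t) :
    alternatingSum a k t = a k - alternatingSum a (k + 1) t := by
  have tail : ∑ i ∈ Icc (k + 1) t, (-1 : ℤ) ^ (i - k) • a i = -alternatingSum a (k + 1) t := by
    rw [alternatingSum, ← sum_neg_distrib]
    refine sum_congr rfl fun i hi ↦ ?_
    rw [mem_Icc] at hi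
    rw [show i - k = i - (k + 1) + 1 by lia, pow_succ, mul_neg_one, neg_smul]
  rw [alternatingSum, ← insert_Icc_add_one_left_eq_Icc hkt, sum_insert (by simp), tail,
    Nat.sub_self, pow_zero, one_smul, sub_eq_add_neg]

end AlternatingSum

/-- The digit bounds for quotients `Z 1, …, Z t`: `0 ≤ z i ≤ Z i` for `1 ≤ i ≤ t`, with the stricter
bound `z t ≤ Z t - 1` on the last digit. The parity condition in the definition of `𝒵` is not
included. -/
structure IsDigitTuple (Z z : ℕ → ℤ) (t : ℕ) : Prop where
  bounds : ∀ i, 1 ≤ i → i ≤ t → 0 ≤ z i ∧ z i ≤ Z i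
  last_le : z t ≤ Z t - 1

section EuclideanChain

variable {G : Type*} [AddCommGroup G] [PartialOrder G]

/-- `t` steps of the Euclidean algorithm, started at `r 0` and `r 1`, with integer quotients
`Z 1, …, Z t`. The entries may lie in any ordered group, so this covers real continued fractions,
and the algorithm need not have stopped: `r (t + 1)` may be nonzero. -/
def IsEuclideanChain (r : ℕ → G) (Z : ℕ → ℤ) (t : ℕ) : Prop :=
  ∀ k < t, r k = Z (k + 1) • r (k + 1) + r (k + 2) ∧ 0 ≤ r (k + 2) ∧ r (k + 2) < r (k + 1)

variable {r : ℕ → G} {Z z : ℕ → ℤ} {t k : ℕ}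

lemma IsEuclideanChain.pos (hr : IsEuclideanChain r Z t) (hk : 1 ≤ k) (hkt : k ≤ t) :
    0 < r k := by
  obtain ⟨k, rfl⟩ := Nat.exists_eq_add_of_le' hk
  obtain ⟨-, hnonneg, hlt⟩ := hr k hkt
  exact hnonneg.trans_lt hlt

variable [IsOrderedAddMonoid G]

lemma IsEuclideanChain.zsmul_last_lt (hr : IsEuclideanChain r Z (k + 1))
    (hz : IsDigitTuple Z z (k + 1)) : z (k + 1) • r (k + 1) < r k := by
  obtain ⟨hrk, hnonneg, -⟩ := hr k k.lt_succ_self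
  have hpos : 0 < r (k + 1) := hr.pos k.succ_pos le_rfl
  calc z (k + 1) • r (k + 1) < Z (k + 1) • r (k + 1) :=
        zsmul_lt_zsmul_left hpos (Int.lt_of_le_sub_one hz.last_le)
    _ ≤ Z (k + 1) • r (k + 1) + r (k + 2) := le_add_of_nonneg_right hnonneg
    _ = r k := hrk.symm

lemma IsEuclideanChain.alternatingSum_succ_lt (hr : IsEuclideanChain r Z t)
    (hz : IsDigitTuple Z z t) (ht : 1 ≤ t) (hkt : k ≤ t) :
    alternatingSum (fun i ↦ z i • r i) (k + 1) t < r k := by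
  obtain ⟨d, hd⟩ := Nat.exists_eq_add_of_le hkt
  induction d using Nat.twoStepInduction generalizing k with
  | zero =>
    rw [alternatingSum_of_lt _ (by lia)]
    exact hr.pos (by lia) hkt
  | one =>
    subst hd
    rw [alternatingSum_eq_sub _ le_rfl, alternatingSum_of_lt _ (Nat.lt_succ_self _), sub_zero]
    exact hr.zsmul_last_lt hz
  | more d ih _ =>
    have tail_lt : alternatingSum (fun i ↦ z i • r i) (k + 3) t < r (k + 2) := ih (by lia) (by lia)
    have hle : z (k + 1) • r (k + 1) ≤ Z (k + 1) • r (k + 1) :=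
      zsmul_le_zsmul_left (hr.pos (by lia) (by lia)).le (hz.bounds _ (by lia) (by lia)).2
    have hnonneg : 0 ≤ z (k + 2) • r (k + 2) :=
      zsmul_nonneg (hr.pos (by lia) (by lia)).le (hz.bounds _ (by lia) (by lia)).1
    calc alternatingSum (fun i ↦ z i • r i) (k + 1) t
        = z (k + 1) • r (k + 1) - z (k + 2) • r (k + 2)
            + alternatingSum (fun i ↦ z i • r i) (k + 3) t := by
          rw [alternatingSum_eq_sub _ (by lia), alternatingSum_eq_sub _ (by lia), sub_add]
      _ < Z (k + 1) • r (k + 1) + r (k + 2) :=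
          add_lt_add_of_le_of_lt ((sub_le_self _ hnonneg).trans hle) tail_lt
      _ = r k := (hr k (by lia)).1.symm

lemma IsEuclideanChain.alternatingSum_pos (hr : IsEuclideanChain r Z t)
    (hz : IsDigitTuple Z z t) (hk : 1 ≤ k) (hkt : k ≤ t) (hzk : 0 < z k) :
    0 < alternatingSum (fun i ↦ z i • r i) k t := by
  rw [alternatingSum_eq_sub _ hkt, sub_pos]
  calc alternatingSum (fun i ↦ z i • r i) (k + 1) t < r k :=
        hr.alternatingSum_succ_lt hz (hk.trans hkt) hkt
    _ = (1 : ℤ) • r k := (one_zsmul _).symm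
    _ ≤ z k • r k := zsmul_le_zsmul_left (hr.pos hk hkt).le hzk

end EuclideanChain

theorem stmt_3_general {G : Type*} [AddCommGroup G] [PartialOrder G] [IsOrderedAddMonoid G]
    {r : ℕ → G} {Z z : ℕ → ℤ} {t : ℕ} (hr : IsEuclideanChain r Z t) (hz : IsDigitTuple Z z t)
    (hlead : (∀ i, 1 ≤ i → i ≤ t → z i = 0) ∨
      (∃ i, 1 ≤ i ∧ i ≤ t ∧ 0 < z i ∧ Odd i ∧ ∀ j, 1 ≤ j → j < i → z j = 0)) :
    ((¬ (∀ i, 1 ≤ i → i ≤ t → z i = 0)) →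
      0 < ∑ i ∈ Icc 1 t, (z i * (-1 : ℤ) ^ (i - 1)) • r i ∧
      ∑ i ∈ Icc 1 t, (z i * (-1 : ℤ) ^ (i - 1)) • r i < r 0) ∧
    ((∀ i, 1 ≤ i → i ≤ t → z i = 0) →
      ∑ i ∈ Icc 1 t, (z i * (-1 : ℤ) ^ (i - 1)) • r i = 0) := by
  have sum_eq : ∑ i ∈ Icc 1 t, (z i * (-1 : ℤ) ^ (i - 1)) • r i =
      alternatingSum (fun i ↦ z i • r i) 1 t :=
    sum_congr rfl fun i _ ↦ by rw [mul_comm, mul_smul]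
  refine ⟨fun hne ↦ ?_, fun hzero ↦ sum_eq_zero fun i hi ↦ ?_⟩
  · obtain ⟨k, hk, hkt, hzk, hodd, hzero⟩ := hlead.resolve_left hne
    have sum_eq_tail : alternatingSum (fun i ↦ z i • r i) 1 t =
        alternatingSum (fun i ↦ z i • r i) k t := by
      rw [alternatingSum_eq_neg_one_pow_smul hk fun j hj hjk ↦ by rw [hzero j hj hjk, zero_smul],
        (hodd.tsub_odd odd_one).neg_one_pow, one_smul]
    rw [sum_eq]
    refine ⟨?_, hr.alternatingSum_succ_lt hz (hk.trans hkt) t.zero_le⟩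
    rw [sum_eq_tail]
    exact hr.alternatingSum_pos hz hk hkt hzk
  · obtain ⟨h1i, hit⟩ := mem_Icc.mp hi
    rw [hzero i h1i hit, zero_mul, zero_smul]

/-- Lemma 3: for every tuple `z ∈ 𝒵` other than the zero tuple, `0 < R(z) < p`,
and `R` of the zero tuple is `0`.  Here `𝒵` consists of the tuples `(z₁,…,z_t)` with
`0 ≤ z_i ≤ Z_i`, `z_t ≤ Z_t - 1`, which are zero or whose first nonzero index is odd,
and `R(z) = Σ_{1≤i≤t} z_i·(-1)^{i-1}·r_i`. -/
theorem stmt_3 (p u : ℤ) (hp : 3 ≤ p) (hpu : IsCoprime u p)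
    (t : ℕ) (ht : 1 ≤ t) (r Z : ℕ → ℤ)
    (hr0 : r 0 = p) (hr1pos : 0 < r 1) (hr1lt : r 1 < p) (hur1 : (u * r 1) % p = 1)
    (hrec : ∀ i, 1 ≤ i → i ≤ t →
      r (i - 1) = Z i * r i + r (i + 1) ∧ 0 ≤ r (i + 1) ∧ r (i + 1) < r i)
    (hrt : r t = 1) :
    ∀ z : ℕ → ℤ,
      (∀ i, 1 ≤ i → i ≤ t → 0 ≤ z i ∧ z i ≤ Z i) →
      z t ≤ Z t - 1 →
      ((∀ i, 1 ≤ i → i ≤ t → z i = 0) ∨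
        (∃ i, 1 ≤ i ∧ i ≤ t ∧ 0 < z i ∧ Odd i ∧ ∀ j, 1 ≤ j → j < i → z j = 0)) →
      ((¬ (∀ i, 1 ≤ i → i ≤ t → z i = 0)) →
        0 < ∑ i ∈ Finset.Icc 1 t, z i * (-1 : ℤ) ^ (i - 1) * r i ∧
        ∑ i ∈ Finset.Icc 1 t, z i * (-1 : ℤ) ^ (i - 1) * r i < p) ∧
      ((∀ i, 1 ≤ i → i ≤ t → z i = 0) →
        ∑ i ∈ Finset.Icc 1 t, z i * (-1 : ℤ) ^ (i - 1) * r i = 0) := by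
  subst hr0
  exact fun z hz hzt ↦ stmt_3_general (fun k hk ↦ hrec (k + 1) k.succ_pos hk) ⟨hz, hzt⟩
end

section
/- Every integer n with 0 ≤ n < p has a representation n = R(z) for some tuple z ∈ 𝒵. -/
/-!
The greedy choice of alternating digits works once the range of `n` is widened to
`-r₁ < n < r₀`. For `d = min ⌈n / r₁⌉ Z₁` the error `d r₁ - n` lies in the same kind of interval
`-r₂ < d r₁ - n < r₁` for the shifted sequence, so the remaining digits come from the Euclidean
algorithm started at `(r₁, r₂)`. Moreover `d > 0` when `n > 0`, so the first nonzero digit of a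
positive `n` can always be taken at the odd index `1`.
-/

/-- The positive integers `r 0, …, r (t + 1)` are the successive terms of a Euclidean algorithm with
positive quotients `q 0, …, q t` and final remainder `r (t + 2) = 0`. Quotients are indexed
from `0`, so that `q i` is the paper's `Z_{i+1}` and `t + 1` is the paper's `t`. -/
structure IsEuclideanChain_s4 (r q : ℕ → ℤ) (t : ℕ) : Prop where
  pos : ∀ i ≤ t + 1, 0 < r i
  quot_pos : ∀ i ≤ t, 0 < q i
  eq_quot_mul_add : ∀ i ≤ t, r i = q i * r (i + 1) + r (i + 2)
  last_eq_zero : r (t + 2) = 0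

/-- The alternating sum `R(z) = z₀ r₁ - z₁ r₂ + z₂ r₃ - ⋯` with `k` terms, its digits being indexed
from `0`. -/
def alternatingValue {R : Type*} [CommRing R] (r z : ℕ → R) (k : ℕ) : R :=
  ∑ i ∈ Finset.range k, z i * (-1) ^ i * r (i + 1)

theorem alternatingValue_succ {R : Type*} [CommRing R] (r z : ℕ → R) (k : ℕ) :
    alternatingValue r z (k + 1) =
      z 0 * r 1 - alternatingValue (fun i ↦ r (i + 1)) (fun i ↦ z (i + 1)) k := by
  simp only [alternatingValue, Finset.sum_range_succ', pow_succ, zero_add, pow_zero, mul_one,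
    mul_neg, neg_mul, Finset.sum_neg_distrib]
  ring

theorem sum_Icc_one_eq_alternatingValue {R : Type*} [CommRing R] (r z : ℕ → R) (k : ℕ) :
    ∑ i ∈ Finset.Icc 1 k, z (i - 1) * (-1) ^ (i - 1) * r i = alternatingValue r z k := by
  rw [← Finset.Ico_add_one_right_eq_Icc, Finset.sum_Ico_eq_sum_range]
  simp only [alternatingValue, Nat.add_sub_cancel, add_comm 1]

theorem exists_digit {a b q s n : ℤ} (hb : 0 < b) (hq : 0 < q) (hs : 0 < s)
    (ha : a = q * b + s) (hbn : -b < n) (hna : n < a) :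
    ∃ d, 0 ≤ d ∧ d ≤ q ∧ (0 < n → 0 < d) ∧ -s < d * b - n ∧ d * b - n < b := by
  rcases le_or_gt n (q * b) with hle | hgt
  · obtain ⟨d, ⟨hd_nonneg, hd_lt⟩, -⟩ := existsUnique_add_zsmul_mem_Ico hb (-n) 0
    rw [smul_eq_mul] at hd_nonneg hd_lt
    have lt_of_mul {x y : ℤ} (h : x * b < y * b) : x < y := lt_of_mul_lt_mul_right h hb.le
    have neg_one_lt : -1 < d := lt_of_mul (by linarith)
    have lt_quot_add_one : d < q + 1 := lt_of_mul (by linarith)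
    exact ⟨d, by omega, by omega, fun hn ↦ lt_of_mul (by linarith), by linarith, by linarith⟩
  · exact ⟨q, hq.le, le_rfl, fun _ ↦ hq, by linarith, by linarith⟩

namespace IsEuclideanChain_s4

variable {r q : ℕ → ℤ} {t : ℕ} {n : ℤ}

theorem tail (h : IsEuclideanChain_s4 r q (t + 1)) :
    IsEuclideanChain_s4 (fun i ↦ r (i + 1)) (fun i ↦ q (i + 1)) t where
  pos i hi := h.pos (i + 1) (by omega)
  quot_pos i hi := h.quot_pos (i + 1) (by omega)
  eq_quot_mul_add i hi := h.eq_quot_mul_add (i + 1) (by omega)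
  last_eq_zero := h.last_eq_zero

theorem last_dvd_zero_and_one (h : IsEuclideanChain_s4 r q t) :
    r (t + 1) ∣ r 0 ∧ r (t + 1) ∣ r 1 := by
  induction t generalizing r q with
  | zero =>
    refine ⟨?_, dvd_rfl⟩
    rw [h.eq_quot_mul_add 0 le_rfl, h.last_eq_zero, add_zero]
    exact dvd_mul_left _ _
  | succ t ih =>
    obtain ⟨dvd_one, dvd_two⟩ := ih h.tail
    refine ⟨?_, dvd_one⟩
    rw [h.eq_quot_mul_add 0 (Nat.zero_le _)]
    exact (dvd_one.mul_left _).add dvd_two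

theorem exists_last_digit (h : IsEuclideanChain_s4 r q 0) (hlow : -r 1 < n) (hup : n < r 0)
    (hdvd : r 1 ∣ n) : ∃ d, 0 ≤ d ∧ d < q 0 ∧ (0 < n → 0 < d) ∧ n = d * r 1 := by
  obtain ⟨d, rfl⟩ := hdvd
  have r_one_pos : 0 < r 1 := h.pos 1 le_rfl
  have lt_of_mul {x y : ℤ} (hxy : r 1 * x < r 1 * y) : x < y :=
    lt_of_mul_lt_mul_left hxy r_one_pos.le
  have r_zero_eq : r 0 = q 0 * r 1 := by
    rw [h.eq_quot_mul_add 0 le_rfl, h.last_eq_zero, add_zero]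
  have neg_one_lt : -1 < d := lt_of_mul (by linarith)
  exact ⟨d, by omega, lt_of_mul (by linarith), fun hn ↦ lt_of_mul (by linarith), mul_comm _ _⟩

theorem exists_alternatingValue_eq (h : IsEuclideanChain_s4 r q t) (hlow : -r 1 < n) (hup : n < r 0)
    (hdvd : r (t + 1) ∣ n) :
    ∃ z : ℕ → ℤ, (∀ i ≤ t, 0 ≤ z i ∧ z i ≤ q i) ∧ z t < q t ∧ (0 < n → 0 < z 0) ∧
      n = alternatingValue r z (t + 1) := by
  induction t generalizing r q n with
  | zero =>
    obtain ⟨d, hd_nonneg, hd_lt, hd_pos, hnd⟩ := h.exists_last_digit hlow hup hdvd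
    refine ⟨fun _ ↦ d, fun i hi ↦ ?_, hd_lt, hd_pos, by simpa [alternatingValue] using hnd⟩
    obtain rfl : i = 0 := by omega
    exact ⟨hd_nonneg, hd_lt.le⟩
  | succ t ih =>
    obtain ⟨d, hd_nonneg, hd_le, hd_pos, hrest_low, hrest_up⟩ :=
      exists_digit (h.pos 1 (by omega)) (h.quot_pos 0 (by omega)) (h.pos 2 (by omega))
        (h.eq_quot_mul_add 0 (by omega)) hlow hup
    have rest_dvd : r (t + 2) ∣ d * r 1 - n :=
      (h.last_dvd_zero_and_one.2.mul_left d).sub hdvd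
    obtain ⟨z, hz, hz_last, -, hrest⟩ := ih h.tail hrest_low hrest_up rest_dvd
    refine ⟨fun | 0 => d | i + 1 => z i, ?_, hz_last, hd_pos, ?_⟩
    · rintro (_ | i) hi
      · exact ⟨hd_nonneg, hd_le⟩
      · exact hz i (by omega)
    · rw [alternatingValue_succ]
      linarith

end IsEuclideanChain_s4

theorem isEuclideanChain_of_remainders {t : ℕ} {r Z : ℕ → ℤ} (hr1lt : r 1 < r 0)
    (hrec : ∀ i, 1 ≤ i → i ≤ t + 1 →
      r (i - 1) = Z i * r i + r (i + 1) ∧ 0 ≤ r (i + 1) ∧ r (i + 1) < r i)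
    (hlast : r (t + 2) = 0) :
    IsEuclideanChain_s4 r (fun i ↦ Z (i + 1)) t := by
  have step (i : ℕ) (hi : i ≤ t) := hrec (i + 1) (by omega) (by omega)
  have pos_succ (i : ℕ) (hi : i ≤ t) : 0 < r (i + 1) := (step i hi).2.1.trans_lt (step i hi).2.2
  have lt_pred (i : ℕ) (hi : i ≤ t) : r (i + 1) < r i := by
    rcases i with _ | i
    · exact hr1lt
    · exact (step i (by omega)).2.2
  refine ⟨fun i hi ↦ ?_, fun i hi ↦ ?_, fun i hi ↦ (step i hi).1, hlast⟩
  · rcases i with _ | i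
    · exact (pos_succ 0 (Nat.zero_le t)).trans hr1lt
    · exact pos_succ i (by omega)
  · obtain ⟨division, -, remainder_lt⟩ := step i hi
    have quot_mul_pos : 0 < Z (i + 1) * r (i + 1) := by
      rw [Nat.add_sub_cancel] at division
      linarith [lt_pred i hi]
    exact pos_of_mul_pos_left quot_mul_pos (pos_succ i hi).le

/-- Since `r t` is the greatest common divisor of `r 0` and `r 1`, only its multiples can be
represented. -/
theorem stmt_4_general (t : ℕ) (ht : 1 ≤ t) (r Z : ℕ → ℤ) (hr1lt : r 1 < r 0)
    (hrec : ∀ i, 1 ≤ i → i ≤ t →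
      r (i - 1) = Z i * r i + r (i + 1) ∧ 0 ≤ r (i + 1) ∧ r (i + 1) < r i)
    (hlast : r (t + 1) = 0) :
    ∀ n : ℤ, 0 ≤ n → n < r 0 → r t ∣ n →
      ∃ z : ℕ → ℤ,
        (∀ i, 1 ≤ i → i ≤ t → 0 ≤ z i ∧ z i ≤ Z i) ∧
        z t ≤ Z t - 1 ∧
        ((∀ i, 1 ≤ i → i ≤ t → z i = 0) ∨
          (∃ i, 1 ≤ i ∧ i ≤ t ∧ 0 < z i ∧ Odd i ∧ ∀ j, 1 ≤ j → j < i → z j = 0)) ∧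
        n = ∑ i ∈ Finset.Icc 1 t, z i * (-1 : ℤ) ^ (i - 1) * r i := by
  intro n hn hup hdvd
  obtain ⟨t, rfl⟩ := Nat.exists_eq_add_of_le' ht
  have chain := isEuclideanChain_of_remainders hr1lt hrec hlast
  rcases hn.eq_or_lt with rfl | hn
  · refine ⟨0, fun i hi hit ↦ ⟨le_rfl, ?_⟩, ?_, Or.inl fun _ _ _ ↦ rfl, by simp⟩
    · obtain ⟨i, rfl⟩ := Nat.exists_eq_add_of_le' hi
      exact (chain.quot_pos i (by omega)).le
    · exact Int.le_sub_one_of_lt (chain.quot_pos t le_rfl)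
  · have hlow : -r 1 < n := (neg_neg_of_pos (chain.pos 1 (by omega))).trans hn
    obtain ⟨z, hz, hz_last, hz_pos, hsum⟩ := chain.exists_alternatingValue_eq hlow hup hdvd
    refine ⟨fun i ↦ z (i - 1), fun i hi hit ↦ ?_, Int.le_sub_one_of_lt hz_last,
      Or.inr ⟨1, le_rfl, ht, hz_pos hn, odd_one, fun j _ _ ↦ by omega⟩,
      hsum.trans (sum_Icc_one_eq_alternatingValue r z (t + 1)).symm⟩
    obtain ⟨i, rfl⟩ := Nat.exists_eq_add_of_le' hi
    exact hz i (by omega)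

/-- Lemma 4: every integer `n` with `0 ≤ n < p` has a representation `n = R(z)`
for some tuple `z ∈ 𝒵`. -/
theorem stmt_4 (p u : ℤ) (hp : 3 ≤ p) (hpu : IsCoprime u p)
    (t : ℕ) (ht : 1 ≤ t) (r Z : ℕ → ℤ)
    (hr0 : r 0 = p) (hr1pos : 0 < r 1) (hr1lt : r 1 < p) (hur1 : (u * r 1) % p = 1)
    (hrec : ∀ i, 1 ≤ i → i ≤ t →
      r (i - 1) = Z i * r i + r (i + 1) ∧ 0 ≤ r (i + 1) ∧ r (i + 1) < r i)
    (hrt : r t = 1) :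
    ∀ n : ℤ, 0 ≤ n → n < p →
      ∃ z : ℕ → ℤ,
        (∀ i, 1 ≤ i → i ≤ t → 0 ≤ z i ∧ z i ≤ Z i) ∧
        z t ≤ Z t - 1 ∧
        ((∀ i, 1 ≤ i → i ≤ t → z i = 0) ∨
          (∃ i, 1 ≤ i ∧ i ≤ t ∧ 0 < z i ∧ Odd i ∧ ∀ j, 1 ≤ j → j < i → z j = 0)) ∧
        n = ∑ i ∈ Finset.Icc 1 t, z i * (-1 : ℤ) ^ (i - 1) * r i := by
  have hlast : r (t + 1) = 0 := by have := hrec t ht le_rfl; omega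
  exact fun n hn hnp ↦ stmt_4_general t ht r Z (hr0 ▸ hr1lt) hrec hlast n hn (hr0 ▸ hnp)
    (hrt ▸ one_dvd n)
end

section
/- For every tuple z = (z₁,...,z_t) ∈ 𝒵, the least nonnegative residue of u·R(z) modulo p equals Σ_{1≤i≤t} z_i·s_i, i.e. ⟨u·Σ_{1≤i≤t} z_i·(−1)^{i−1}·r_i⟩_p = Σ_{1≤i≤t} z_i·s_i. -/
/-!
The signed remainders `(-1) ^ (i - 1) * r i` satisfy the same three-term recurrence as `s`, and
modulo `p` their multiples by `u` agree with `s` at the indices `0` and `1`; hence they agree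
everywhere, and `u * R(z) ≡ ∑ z i * s i`. It remains to see that the right-hand side is a reduced
residue. The quantity `r k * s (k + 1) + r (k + 1) * s k` is conserved along the algorithm, which
gives `s (t + 1) = p`, while `∑ Z i * s i` telescopes to `s (t + 1) + s t - 1`. Lowering the last
digit by one therefore brings every digit sum below `p`.
-/

section Recurrences

variable {R : Type*} {a r x z : ℕ → R} {n : ℕ}

/-- The recurrence `x (i + 1) = a i * x i + x (i - 1)` of continuants with partial quotients
`a 1, …, a n`, shifted by one so that no truncated subtraction occurs. The initial values
`x 0` and `x 1` are left free. -/
def IsContinuantSeq [Semiring R] (a x : ℕ → R) (n : ℕ) : Prop :=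
  ∀ i < n, x (i + 2) = a (i + 1) * x (i + 1) + x i

/-- The remainders of `n` steps of the Euclidean algorithm started at `r 0` and `r 1`, with
quotients `a 1, …, a n`. Only the division identities are recorded, not the size conditions
on the remainders. -/
def IsRemainderSeq [Semiring R] (a r : ℕ → R) (n : ℕ) : Prop :=
  ∀ i < n, r i = a (i + 1) * r (i + 1) + r (i + 2)

theorem IsRemainderSeq.isContinuantSeq_neg_one_pow_mul [Ring R] (hr : IsRemainderSeq a r n) :
    IsContinuantSeq a (fun i ↦ (-1) ^ (i + 1) * r i) n := by
  intro i hi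
  rcases i.even_or_odd with hi_parity | hi_parity <;>
    simp [pow_succ, hi_parity.neg_one_pow, hr i hi]

theorem IsRemainderSeq.mul_add_mul_eq [CommSemiring R] (hr : IsRemainderSeq a r n)
    (hx : IsContinuantSeq a x n) {k : ℕ} (hk : k ≤ n) :
    r k * x (k + 1) + r (k + 1) * x k = r 0 * x 1 + r 1 * x 0 := by
  induction k with
  | zero => rfl
  | succ k ih =>
    rw [← ih (by lia), hx k hk, hr k hk]
    ring

namespace IsContinuantSeq

theorem modEq {p : ℤ} {a x y : ℕ → ℤ} (hx : IsContinuantSeq a x n) (hy : IsContinuantSeq a y n)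
    (h0 : x 0 ≡ y 0 [ZMOD p]) (h1 : x 1 ≡ y 1 [ZMOD p]) {k : ℕ} (hk : k ≤ n + 1) :
    x k ≡ y k [ZMOD p] := by
  induction k using Nat.twoStepInduction with
  | zero => exact h0
  | one => exact h1
  | more k ih ih' =>
    rw [hx k (by lia), hy k (by lia)]
    exact ((ih' (by lia)).mul_left _).add (ih (by lia))

theorem const_mul [CommSemiring R] (hx : IsContinuantSeq a x n) (c : R) :
    IsContinuantSeq a (fun i ↦ c * x i) n := by
  intro i hi
  simp only [hx i hi]
  ring

theorem sum_Icc_mul_add [Semiring R] (hx : IsContinuantSeq a x n) :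
    ∑ i ∈ Finset.Icc 1 n, a i * x i + (x 1 + x 0) = x (n + 1) + x n := by
  induction n with
  | zero => simp
  | succ n ih =>
    have ih := ih fun i hi ↦ hx i (by lia)
    rw [Finset.sum_Icc_succ_top (by lia), add_right_comm, ih, hx n (by lia)]
    abel

theorem nonneg [Semiring R] [PartialOrder R] [IsOrderedRing R] (hx : IsContinuantSeq a x n)
    (ha : ∀ i, 1 ≤ i → i ≤ n → 0 ≤ a i) (h0 : 0 ≤ x 0) (h1 : 0 ≤ x 1) {k : ℕ} (hk : k ≤ n + 1) :
    0 ≤ x k := by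
  induction k using Nat.twoStepInduction with
  | zero => exact h0
  | one => exact h1
  | more k ih ih' =>
    rw [hx k (by lia)]
    exact add_nonneg (mul_nonneg (ha _ (by lia) (by lia)) (ih' (by lia))) (ih (by lia))

theorem sum_Icc_mul_lt [Ring R] [PartialOrder R] [IsOrderedRing R] (hx : IsContinuantSeq a x n)
    (h0 : x 0 = 0) (h1 : 0 < x 1) (hz : ∀ i, 1 ≤ i → i ≤ n → 0 ≤ z i ∧ z i ≤ a i)
    (hzn : z n ≤ a n - 1) :
    ∑ i ∈ Finset.Icc 1 n, z i * x i < x (n + 1) := by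
  have hx_nonneg {i : ℕ} (hi : i ≤ n) : 0 ≤ x i :=
    hx.nonneg (fun i h1i hin ↦ (hz i h1i hin).1.trans (hz i h1i hin).2) h0.ge h1.le (by lia)
  have hle : ∑ i ∈ Finset.Icc 1 n, z i * x i + x n ≤ ∑ i ∈ Finset.Icc 1 n, a i * x i := by
    cases n with
    | zero => simp [h0]
    | succ m =>
      have hlast : z (m + 1) * x (m + 1) + x (m + 1) ≤ a (m + 1) * x (m + 1) := by
        rw [← add_one_mul]
        exact mul_le_mul_of_nonneg_right (le_sub_iff_add_le.mp hzn) (hx_nonneg le_rfl)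
      rw [Finset.sum_Icc_succ_top (by lia), Finset.sum_Icc_succ_top (by lia), add_assoc]
      refine add_le_add (Finset.sum_le_sum fun i hi ↦ ?_) hlast
      obtain ⟨h1i, him⟩ := Finset.mem_Icc.mp hi
      exact mul_le_mul_of_nonneg_right (hz i h1i (by lia)).2 (hx_nonneg (by lia))
  refine lt_of_add_lt_add_right (a := x n) ?_
  calc ∑ i ∈ Finset.Icc 1 n, z i * x i + x n
      ≤ ∑ i ∈ Finset.Icc 1 n, a i * x i := hle
    _ < ∑ i ∈ Finset.Icc 1 n, a i * x i + (x 1 + x 0) := by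
      rw [h0, add_zero]
      exact lt_add_of_pos_right _ h1
    _ = x (n + 1) + x n := hx.sum_Icc_mul_add

end IsContinuantSeq

end Recurrences

theorem IsRemainderSeq.mul_neg_one_pow_mul_modEq {p u : ℤ} {n : ℕ} {a r x : ℕ → ℤ}
    (hr : IsRemainderSeq a r n) (hx : IsContinuantSeq a x n) (hr0 : r 0 = p)
    (hur1 : u * r 1 ≡ 1 [ZMOD p]) (hx0 : x 0 = 0) (hx1 : x 1 = 1) {i : ℕ} (hi : i ≤ n + 1) :
    u * ((-1) ^ (i + 1) * r i) ≡ x i [ZMOD p] := by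
  refine (hr.isContinuantSeq_neg_one_pow_mul.const_mul u).modEq hx ?_ ?_ hi
  · simp [hr0, hx0, Int.modEq_zero_iff_dvd]
  · simpa [hx1] using hur1

theorem IsRemainderSeq.mul_sum_Icc_modEq {p u : ℤ} {n : ℕ} {a r x : ℕ → ℤ}
    (hr : IsRemainderSeq a r n) (hx : IsContinuantSeq a x n) (hr0 : r 0 = p)
    (hur1 : u * r 1 ≡ 1 [ZMOD p]) (hx0 : x 0 = 0) (hx1 : x 1 = 1) (z : ℕ → ℤ) :
    u * ∑ i ∈ Finset.Icc 1 n, z i * (-1) ^ (i - 1) * r i ≡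
      ∑ i ∈ Finset.Icc 1 n, z i * x i [ZMOD p] := by
  rw [Finset.mul_sum]
  refine Int.ModEq.sum fun i hi ↦ ?_
  obtain ⟨h1i, hin⟩ := Finset.mem_Icc.mp hi
  have hsign : (-1 : ℤ) ^ (i - 1) = (-1) ^ (i + 1) := by
    rw [show i + 1 = i - 1 + 2 by lia, pow_add, neg_one_sq, mul_one]
  calc u * (z i * (-1) ^ (i - 1) * r i)
      = z i * (u * ((-1) ^ (i + 1) * r i)) := by rw [hsign]; ring
    _ ≡ z i * x i [ZMOD p] :=
      (hr.mul_neg_one_pow_mul_modEq hx hr0 hur1 hx0 hx1 (by lia)).mul_left _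

theorem stmt_7_general {p u : ℤ} {t : ℕ} {r Z s z : ℕ → ℤ} (hr0 : r 0 = p)
    (hur1 : u * r 1 ≡ 1 [ZMOD p]) (hr : IsRemainderSeq Z r t) (hrt : r t = 1)
    (hrt' : r (t + 1) = 0) (hs0 : s 0 = 0) (hs1 : s 1 = 1) (hs : IsContinuantSeq Z s t)
    (hz : ∀ i, 1 ≤ i → i ≤ t → 0 ≤ z i ∧ z i ≤ Z i) (hzt : z t ≤ Z t - 1) :
    (u * ∑ i ∈ Finset.Icc 1 t, z i * (-1 : ℤ) ^ (i - 1) * r i) % p =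
      ∑ i ∈ Finset.Icc 1 t, z i * s i := by
  have hst : s (t + 1) = p := by
    simpa [hr0, hrt, hrt', hs0, hs1] using hr.mul_add_mul_eq hs le_rfl
  have hlt : ∑ i ∈ Finset.Icc 1 t, z i * s i < p :=
    hst ▸ hs.sum_Icc_mul_lt hs0 (by simp [hs1]) hz hzt
  have hZ (i : ℕ) (h1i : 1 ≤ i) (hit : i ≤ t) : 0 ≤ Z i :=
    (hz i h1i hit).1.trans (hz i h1i hit).2
  have hnonneg : 0 ≤ ∑ i ∈ Finset.Icc 1 t, z i * s i := by
    refine Finset.sum_nonneg fun i hi ↦ ?_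
    obtain ⟨h1i, hit⟩ := Finset.mem_Icc.mp hi
    exact mul_nonneg (hz i h1i hit).1 (hs.nonneg hZ hs0.ge (by simp [hs1]) (by lia))
  exact (hr.mul_sum_Icc_modEq hs hr0 hur1 hs0 hs1 z).eq.trans (Int.emod_eq_of_lt hnonneg hlt)

/-- Lemma 7: for every tuple `z ∈ 𝒵`,
`⟨u·Σ_{1≤i≤t} z_i·(-1)^{i-1}·r_i⟩_p = Σ_{1≤i≤t} z_i·s_i`. -/
theorem stmt_7 (p u : ℤ) (hp : 3 ≤ p) (hpu : IsCoprime u p)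
    (t : ℕ) (ht : 1 ≤ t) (r Z : ℕ → ℤ)
    (hr0 : r 0 = p) (hr1pos : 0 < r 1) (hr1lt : r 1 < p) (hur1 : (u * r 1) % p = 1)
    (hrec : ∀ i, 1 ≤ i → i ≤ t →
      r (i - 1) = Z i * r i + r (i + 1) ∧ 0 ≤ r (i + 1) ∧ r (i + 1) < r i)
    (hrt : r t = 1)
    (s : ℕ → ℤ) (hs0 : s 0 = 0) (hs1 : s 1 = 1)
    (hsrec : ∀ i, 1 ≤ i → i ≤ t → s (i + 1) = Z i * s i + s (i - 1)) :
    ∀ z : ℕ → ℤ,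
      (∀ i, 1 ≤ i → i ≤ t → 0 ≤ z i ∧ z i ≤ Z i) →
      z t ≤ Z t - 1 →
      ((∀ i, 1 ≤ i → i ≤ t → z i = 0) ∨
        (∃ i, 1 ≤ i ∧ i ≤ t ∧ 0 < z i ∧ Odd i ∧ ∀ j, 1 ≤ j → j < i → z j = 0)) →
      (u * ∑ i ∈ Finset.Icc 1 t, z i * (-1 : ℤ) ^ (i - 1) * r i) % p =
        ∑ i ∈ Finset.Icc 1 t, z i * s i := by
  intro z hz hzt _
  obtain ⟨-, hrt_nonneg, hrt_lt⟩ := hrec t ht le_rfl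
  have hur1_modEq : u * r 1 ≡ 1 [ZMOD p] := by
    rw [Int.ModEq, hur1, Int.emod_eq_of_lt one_pos.le (by lia)]
  exact stmt_7_general hr0 hur1_modEq (fun i hi ↦ (hrec (i + 1) (by lia) hi).1) hrt (by lia)
    hs0 hs1 (fun i hi ↦ hsrec (i + 1) (by lia) hi) hz hzt
end

section
/- Let a = p − r_{2k} + z·r_{2k+1} with 2k+1 ≤ t and 0 ≤ z ≤ Z_{2k+1} − 1. Then ⟨ua⟩_p < min_{a<n<p} ⟨un⟩_p; consequently r_{2k} − z·r_{2k+1} ∈ D_Δ(p,u). -/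
/-!
The vectors `(m, v)` with `v ≡ u m (mod p)` form a lattice in which all `2 × 2` determinants are
divisible by `p`. Running the Euclidean recurrence on the second coordinate gives cofactors
`c_j ≥ 0` such that `(r_j, (-1)^(j+1) c_j)` lies in the lattice and consecutive vectors have
determinant `± p`. Hence `(a, S)` with `S = c_{2k} + z c_{2k+1}` lies in the lattice and satisfies
`(p - a) c_{2k+1} + r_{2k+1} S = p`. A lattice vector `(n, N)` with `a < n < p` and `0 ≤ N ≤ S`
would make `(p - n) c_{2k+1} + r_{2k+1} N` a multiple of `p` strictly between `0` and `p`.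
-/

/-- The cofactors of the Euclidean algorithm with quotients `Z 1, Z 2, …`: up to the sign
`(-1) ^ (j + 1)`, `cofactor Z j` is the coefficient of `r 1` when the remainder `r j` is written as
a combination of `r 0` and `r 1`. The signs are dropped so that positive quotients give nonnegative
cofactors; `Z 0` is never used. -/
def cofactor {R : Type*} [Semiring R] (Z : ℕ → R) : ℕ → R
  | 0 => 0
  | 1 => 1
  | j + 2 => Z (j + 1) * cofactor Z (j + 1) + cofactor Z j

theorem cofactor_nonneg_and_succ_pos {R : Type*} [Semiring R] [PartialOrder R]
    [IsStrictOrderedRing R] {Z : ℕ → R} {j : ℕ} (hZ : ∀ i < j, 0 < Z (i + 1)) :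
    0 ≤ cofactor Z j ∧ 0 < cofactor Z (j + 1) := by
  induction j with
  | zero => exact ⟨le_rfl, one_pos⟩
  | succ j ih =>
    obtain ⟨hj, hj_succ⟩ := ih fun i hi => hZ i (by lia)
    exact ⟨hj_succ.le, add_pos_of_pos_of_nonneg (mul_pos (hZ j j.lt_succ_self) hj_succ) hj⟩

theorem cofactor_succ_mul_add_cofactor_mul_succ {R : Type*} [CommSemiring R] {r Z : ℕ → R} {j : ℕ}
    (hrec : ∀ i < j, r i = Z (i + 1) * r (i + 1) + r (i + 2)) :
    cofactor Z (j + 1) * r j + cofactor Z j * r (j + 1) = r 0 := by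
  induction j with
  | zero => simp [cofactor]
  | succ j ih =>
    rw [← ih fun i hi => hrec i (by lia), hrec j j.lt_succ_self, cofactor]
    ring

theorem mul_remainder_modEq_cofactor {p u : ℤ} {r Z : ℕ → ℤ} (hr0 : u * r 0 ≡ 0 [ZMOD p])
    (hr1 : u * r 1 ≡ 1 [ZMOD p]) :
    ∀ {j : ℕ}, (∀ i, i + 1 < j → r i = Z (i + 1) * r (i + 1) + r (i + 2)) →
      u * r j ≡ (-1) ^ (j + 1) * cofactor Z j [ZMOD p]
  | 0, _ => by simpa [cofactor] using hr0
  | 1, _ => by simpa [cofactor] using hr1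
  | j + 2, hrec => by
    have hj := mul_remainder_modEq_cofactor hr0 hr1 (j := j) fun i hi => hrec i (by lia)
    have hj_succ := mul_remainder_modEq_cofactor hr0 hr1 (j := j + 1) fun i hi => hrec i (by lia)
    calc u * r (j + 2) = u * r j - Z (j + 1) * (u * r (j + 1)) := by
          rw [hrec j (by lia)]; ring
      _ ≡ (-1) ^ (j + 1) * cofactor Z j -
            Z (j + 1) * ((-1) ^ (j + 1 + 1) * cofactor Z (j + 1)) [ZMOD p] :=
          hj.sub (hj_succ.mul_left _)
      _ = (-1) ^ (j + 2 + 1) * cofactor Z (j + 2) := by rw [cofactor]; ring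

theorem quotient_pos {r Z : ℕ → ℤ} {t i : ℕ} (hr : r 1 < r 0)
    (hdiv : ∀ i < t, r i = Z (i + 1) * r (i + 1) + r (i + 2) ∧
      0 ≤ r (i + 2) ∧ r (i + 2) < r (i + 1)) (hi : i < t) : 0 < Z (i + 1) := by
  obtain ⟨hrec, hnonneg, hlt⟩ := hdiv i hi
  have hdesc : r (i + 1) < r i := by
    cases i with
    | zero => exact hr
    | succ i => exact (hdiv i (by lia)).2.2
  have hmul : 0 < Z (i + 1) * r (i + 1) := by linarith
  exact pos_of_mul_pos_left hmul (hnonneg.trans hlt.le)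

theorem dvd_det_of_mul_modEq {p u m v m' v' : ℤ} (h : u * m ≡ v [ZMOD p])
    (h' : u * m' ≡ v' [ZMOD p]) : p ∣ m' * v - m * v' := by
  have hcross : m * v' ≡ m' * v [ZMOD p] :=
    calc m * v' ≡ m * (u * m') [ZMOD p] := h'.symm.mul_left m
      _ = m' * (u * m) := by ring
      _ ≡ m' * v [ZMOD p] := h.mul_left m'
  exact hcross.dvd

theorem lt_mul_emod_of_det_eq {p u a y S s n : ℤ} (hp : 0 < p) (hy : 0 < y) (hs : 0 < s)
    (hus : u * y ≡ s [ZMOD p]) (hdet : (p - a) * s + y * S = p) (han : a < n) (hnp : n < p) :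
    S < u * n % p := by
  by_contra! hle
  have hdvd : p ∣ (p - n) * s + y * (u * n % p) := by
    have hdet_dvd := dvd_det_of_mul_modEq (Int.mod_modEq (u * n) p).symm hus
    have hshift : (p - n) * s + y * (u * n % p) = y * (u * n % p) - n * s + p * s := by ring
    exact hshift ▸ hdet_dvd.add (dvd_mul_right p s)
  have hpos : 0 < (p - n) * s + y * (u * n % p) :=
    add_pos_of_pos_of_nonneg (mul_pos (sub_pos.2 hnp) hs)
      (mul_nonneg hy.le (Int.emod_nonneg _ hp.ne'))
  have hlt : (p - n) * s + y * (u * n % p) < p :=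
    calc (p - n) * s + y * (u * n % p) < (p - a) * s + y * (u * n % p) := by gcongr
      _ ≤ (p - a) * s + y * S := by gcongr
      _ = p := hdet
  exact (Int.le_of_dvd hpos hdvd).not_gt hlt

theorem emod_le_of_modEq {p b S : ℤ} (hp : 0 ≤ p) (hS : 0 ≤ S) (h : b ≡ S [ZMOD p]) :
    b % p ≤ S :=
  calc b % p = S % p := h
    _ = S - p * (S / p) := Int.emod_def S p
    _ ≤ S := sub_le_self S (mul_nonneg hp (Int.ediv_nonneg hS hp))

theorem mul_semiconvergent_emod_lt {p u x y s s' z n : ℤ} (hp : 0 < p) (hy : 0 < y) (hs : 0 ≤ s)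
    (hs' : 0 < s') (hz : 0 ≤ z) (hux : u * x ≡ -s [ZMOD p]) (huy : u * y ≡ s' [ZMOD p])
    (hdet : s' * x + s * y = p) (hn : p - x + z * y < n) (hnp : n < p) :
    u * (p - x + z * y) % p < u * n % p := by
  have hmodEq : u * (p - x + z * y) ≡ s + z * s' [ZMOD p] :=
    calc u * (p - x + z * y) = u * p - u * x + z * (u * y) := by ring
      _ ≡ 0 - -s + z * s' [ZMOD p] :=
        ((Int.modEq_zero_iff_dvd.2 (dvd_mul_left p u)).sub hux).add (huy.mul_left z)
      _ = s + z * s' := by ring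
  exact (emod_le_of_modEq hp.le (by positivity) hmodEq).trans_lt
    (lt_mul_emod_of_det_eq hp hy hs' huy (by linear_combination hdet) hn hnp)

theorem max_mul_emod_mul_self_emod {p : ℤ} (u a : ℤ) (hp : p ≠ 0) :
    max (u * a % p) (u * p % p) = u * a % p := by
  rw [Int.mul_emod_left]
  exact max_eq_left (Int.emod_nonneg _ hp)

/-- Lemma 8: for `a = p - r_{2k} + z·r_{2k+1}` with `2k+1 ≤ t` and `0 ≤ z ≤ Z_{2k+1}-1`,
we have `⟨ua⟩_p < min_{a<n<p} ⟨un⟩_p`, whence `r_{2k} - z·r_{2k+1} ∈ D_Δ(p,u)`. -/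
theorem stmt_8 (p u : ℤ) (hp : 3 ≤ p) (hpu : IsCoprime u p)
    (t : ℕ) (ht : 1 ≤ t) (r Z : ℕ → ℤ)
    (hr0 : r 0 = p) (hr1pos : 0 < r 1) (hr1lt : r 1 < p) (hur1 : (u * r 1) % p = 1)
    (hrec : ∀ i, 1 ≤ i → i ≤ t →
      r (i - 1) = Z i * r i + r (i + 1) ∧ 0 ≤ r (i + 1) ∧ r (i + 1) < r i)
    (hrt : r t = 1)
    (k : ℕ) (hk : 2 * k + 1 ≤ t) (z : ℤ) (hz0 : 0 ≤ z) (hz1 : z ≤ Z (2 * k + 1) - 1)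
    (a : ℤ) (ha : a = p - r (2 * k) + z * r (2 * k + 1)) :
    (∀ n : ℤ, a < n → n < p → (u * a) % p < (u * n) % p) ∧
    r (2 * k) - z * r (2 * k + 1) ∈
      {d : ℤ | ∃ a' b' : ℤ, (a' < b' ∧ ∀ n : ℤ, a' < n → n < b' →
          max ((u * a') % p) ((u * b') % p) < (u * n) % p) ∧ d = b' - a'} := by
  have hp0 : 0 < p := by lia
  have hdiv : ∀ i < t, r i = Z (i + 1) * r (i + 1) + r (i + 2) ∧
      0 ≤ r (i + 2) ∧ r (i + 2) < r (i + 1) := fun i hi => hrec (i + 1) (by lia) hi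
  obtain ⟨hstep, hnonneg, hlt⟩ := hdiv (2 * k) hk
  have hy : 0 < r (2 * k + 1) := hnonneg.trans_lt hlt
  have hap : a < p := by nlinarith [mul_le_mul_of_nonneg_right hz1 hy.le]
  obtain ⟨hc, hc'⟩ := cofactor_nonneg_and_succ_pos (Z := Z) (j := 2 * k) fun i hi =>
    quotient_pos (hr0 ▸ hr1lt) hdiv (by lia)
  have hcong {j : ℕ} (hj : j ≤ 2 * k + 1) : u * r j ≡ (-1) ^ (j + 1) * cofactor Z j [ZMOD p] :=
    mul_remainder_modEq_cofactor (hr0 ▸ Int.mul_emod_left u p)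
      (hur1.trans (Int.emod_eq_of_lt one_pos.le (by lia)).symm) fun i hi => (hdiv i (by lia)).1
  have hux : u * r (2 * k) ≡ -cofactor Z (2 * k) [ZMOD p] := by
    simpa [pow_succ] using hcong (j := 2 * k) (by lia)
  have huy : u * r (2 * k + 1) ≡ cofactor Z (2 * k + 1) [ZMOD p] := by
    simpa [pow_succ] using hcong le_rfl
  have hdet : cofactor Z (2 * k + 1) * r (2 * k) + cofactor Z (2 * k) * r (2 * k + 1) = p :=
    hr0 ▸ cofactor_succ_mul_add_cofactor_mul_succ fun i hi => (hdiv i (by lia)).1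
  have hmin : ∀ n : ℤ, a < n → n < p → u * a % p < u * n % p := fun n han hnp =>
    ha ▸ mul_semiconvergent_emod_lt hp0 hy hc hc' hz0 hux huy hdet (ha ▸ han) hnp
  exact ⟨hmin, a, p, ⟨hap, fun n han hnp =>
    (max_mul_emod_mul_self_emod u a hp0.ne').trans_lt (hmin n han hnp)⟩, by rw [ha]; ring⟩
end

section
/- Let b = r_{2k−1} − z·r_{2k} with 2k ≤ t and 0 ≤ z ≤ Z_{2k} − 1. Then ⟨ub⟩_p < min_{0<n<b} ⟨un⟩_p; consequently r_{2k−1} − z·r_{2k} ∈ D_Δ(p,u). -/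
/-!
The points `(n, m)` with `m ≡ u n (mod p)` form a lattice of determinant `p`. Running the Euclidean
algorithm on `(p, r₁)` produces the lattice vectors `(rₙ, (-1)ⁿ⁺¹ qₙ)`, where the cofactors `qₙ` are
nonnegative and two consecutive vectors have determinant `± p`. For `b = r_{2k-1} - z r_{2k}` this
gives vectors `(b, S)` and `(r_{2k}, -T)` with `b T + S r_{2k} = p`. The determinant of any lattice
vector `(n, m)` against the second one is `-(n T + m r_{2k})`, a multiple of `p`; if `n` and `m` are
nonnegative and not both zero, then `n T + m r_{2k} ≥ p`, so `n < b` forces `m > S`.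
-/

section Records

/-- `b` is a record of `n ↦ ⟨un⟩_p`: its residue lies strictly below that of every `0 < n < b`. -/
def IsResidueRecord (p u b : ℤ) : Prop :=
  ∀ n : ℤ, 0 < n → n < b → (u * b) % p < (u * n) % p

/-- The set `D_Δ(p, u)` of differences `b - a` over the pairs `a < b` whose residues `⟨ua⟩_p` and
`⟨ub⟩_p` lie below all residues `⟨un⟩_p` with `a < n < b`. -/
def residueGaps (p u : ℤ) : Set ℤ :=
  {d : ℤ | ∃ a b : ℤ, (a < b ∧ ∀ n : ℤ, a < n → n < b →
    max ((u * a) % p) ((u * b) % p) < (u * n) % p) ∧ d = b - a}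

variable {p u b x R S T z : ℤ}

theorem IsResidueRecord.mem_residueGaps (h : IsResidueRecord p u b) (hp : p ≠ 0) (hb : 0 < b) :
    b ∈ residueGaps p u := by
  refine ⟨0, b, ⟨hb, fun n hn hnb => ?_⟩, (sub_zero b).symm⟩
  rw [mul_zero, Int.zero_emod, max_eq_right (Int.emod_nonneg _ hp)]
  exact h n hn hnb

theorem dvd_mul_add_emod_mul (hR : p ∣ u * R + T) (n : ℤ) : p ∣ n * T + (u * n) % p * R := by
  have hn : p ∣ u * n - (u * n) % p := Int.dvd_self_sub_emod
  convert Int.dvd_sub (hR.mul_left n) (hn.mul_left R) using 1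
  ring

theorem isResidueRecord_of_mul_add_mul_eq (hR : 0 ≤ R) (hS : 0 ≤ S) (hT : 0 < T)
    (hdet : b * T + S * R = p) (hbS : p ∣ u * b - S) (hRT : p ∣ u * R + T) :
    IsResidueRecord p u b := by
  intro n hn hnb
  have hb : 0 < b := hn.trans hnb
  have hp : 0 < p := hdet ▸ by positivity
  have hres : 0 ≤ (u * n) % p := Int.emod_nonneg _ hp.ne'
  have hle : p ≤ n * T + (u * n) % p * R :=
    Int.le_of_dvd (by positivity) (dvd_mul_add_emod_mul hRT n)
  have hlt : S * R < (u * n) % p * R := by linarith [mul_lt_mul_of_pos_right hnb hT]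
  calc (u * b) % p = S % p := (Int.modEq_iff_dvd.mpr hbS).symm
    _ ≤ S := by linarith [Int.mul_ediv_add_emod S p, mul_nonneg hp.le (Int.ediv_nonneg hS hp.le)]
    _ < (u * n) % p := lt_of_mul_lt_mul_right hlt hR

-- Replacing `(x, S)` by `(x, S) - z (R, -T)` preserves its determinant against `(R, -T)`.
theorem isResidueRecord_sub_mul (hR : 0 ≤ R) (hS : 0 ≤ S) (hT : 0 < T) (hz : 0 ≤ z)
    (hdet : x * T + R * S = p) (hxS : p ∣ u * x - S) (hRT : p ∣ u * R + T) :
    IsResidueRecord p u (x - z * R) := by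
  refine isResidueRecord_of_mul_add_mul_eq (S := S + z * T) hR (by positivity) hT ?_ ?_ hRT
  · linear_combination hdet
  · convert Int.dvd_sub hxS (hRT.mul_left z) using 1
    ring

end Records

section Cofactors

/-- The cofactors `qₙ` of the Euclidean algorithm with quotients `Z 1, Z 2, …`: up to sign, `qₙ` is
the coefficient of `r 1` in the expression of the remainder `r n` in terms of `r 0` and `r 1`.
It is the continuant of `Z 1, …, Z (n - 1)`; quotients are indexed from `1`. -/
def euclidCofactor {A : Type*} [Semiring A] (Z : ℕ → A) : ℕ → A
  | 0 => 0
  | 1 => 1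
  | n + 2 => Z (n + 1) * euclidCofactor Z (n + 1) + euclidCofactor Z n

theorem euclidCofactor_succ_pos {A : Type*} [Semiring A] [PartialOrder A] [IsStrictOrderedRing A]
    {Z : ℕ → A} : ∀ {n : ℕ}, (∀ i < n, 0 < Z (i + 1)) → 0 < euclidCofactor Z (n + 1)
  | 0, _ => by simp [euclidCofactor]
  | 1, hZ => by simpa [euclidCofactor] using hZ 0 one_pos
  | n + 2, hZ =>
    add_pos
      (mul_pos (hZ (n + 1) (by omega)) (euclidCofactor_succ_pos fun i hi => hZ i (by omega)))
      (euclidCofactor_succ_pos fun i hi => hZ i (by omega))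

theorem mul_euclidCofactor_add_mul_euclidCofactor {A : Type*} [CommSemiring A] {r Z : ℕ → A}
    {n : ℕ} (hr : ∀ i < n, r i = Z (i + 1) * r (i + 1) + r (i + 2)) :
    r n * euclidCofactor Z (n + 1) + r (n + 1) * euclidCofactor Z n = r 0 := by
  induction n with
  | zero => simp [euclidCofactor]
  | succ n ih =>
    rw [← ih fun i hi => hr i (by omega), hr n n.lt_succ_self, euclidCofactor]
    ring

theorem dvd_mul_add_neg_one_pow_mul_euclidCofactor {A : Type*} [CommRing A] {u : A} {r Z : ℕ → A}
    (hu : r 0 ∣ u * r 1 - 1) : ∀ {n : ℕ},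
    (∀ i, i + 1 < n → r i = Z (i + 1) * r (i + 1) + r (i + 2)) →
      r 0 ∣ u * r n + (-1) ^ n * euclidCofactor Z n
  | 0, _ => by simp [euclidCofactor]
  | 1, _ => by simpa [euclidCofactor, sub_eq_add_neg] using hu
  | n + 2, hr => by
    have ih₀ := dvd_mul_add_neg_one_pow_mul_euclidCofactor hu fun i (hi : i + 1 < n) =>
      hr i (by omega)
    have ih₁ := dvd_mul_add_neg_one_pow_mul_euclidCofactor hu fun i (hi : i + 1 < n + 1) =>
      hr i (by omega)
    convert ih₀.sub (ih₁.mul_left (Z (n + 1))) using 1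
    rw [hr n (by omega), euclidCofactor]
    ring

end Cofactors

/-- `r 0, r 1, …, r (t + 1)` are the remainders and `Z 1, …, Z t` the quotients of `t` steps of the
Euclidean algorithm applied to `r 0 > r 1`. Stopping early is allowed: `r (t + 1)` may be
nonzero. -/
structure IsEuclideanRun (r Z : ℕ → ℤ) (t : ℕ) : Prop where
  eq_mul_add : ∀ i < t, r i = Z (i + 1) * r (i + 1) + r (i + 2)
  nonneg : ∀ i ≤ t, 0 ≤ r (i + 1)
  lt : ∀ i ≤ t, r (i + 1) < r i

namespace IsEuclideanRun

variable {r Z : ℕ → ℤ} {t i m : ℕ} {u z : ℤ}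

theorem quotient_pos (h : IsEuclideanRun r Z t) (hi : i < t) : 0 < Z (i + 1) := by
  have hmul : 0 < Z (i + 1) * r (i + 1) := by
    linarith [h.eq_mul_add i hi, h.lt i hi.le, h.lt (i + 1) hi]
  exact pos_of_mul_pos_left hmul (h.nonneg i hi.le)

theorem sub_mul_pos (h : IsEuclideanRun r Z t) (hi : i < t) (hz : z < Z (i + 1)) :
    0 < r i - z * r (i + 1) := by
  have hnext : 0 ≤ r (i + 2) := h.nonneg (i + 1) hi
  have hpos : 0 < r (i + 1) := hnext.trans_lt (h.lt (i + 1) hi)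
  calc 0 < (Z (i + 1) - z) * r (i + 1) + r (i + 2) :=
        add_pos_of_pos_of_nonneg (mul_pos (sub_pos.mpr hz) hpos) hnext
    _ = r i - z * r (i + 1) := by rw [h.eq_mul_add i hi]; ring

-- For odd `n` the sign in `u * r n ≡ (-1) ^ (n + 1) * q n` is positive, so `r n` has residue `q n`.
theorem isResidueRecord_sub_mul (h : IsEuclideanRun r Z t) (hu : r 0 ∣ u * r 1 - 1)
    (hm : 2 * m + 1 < t) (hz : 0 ≤ z) :
    IsResidueRecord (r 0) u (r (2 * m + 1) - z * r (2 * m + 2)) := by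
  have hcofactor_pos {n : ℕ} (hn : n ≤ t) : 0 < euclidCofactor Z (n + 1) :=
    euclidCofactor_succ_pos fun i hi => h.quotient_pos (hi.trans_le hn)
  have hdvd {n : ℕ} (hn : n ≤ t) : r 0 ∣ u * r n + (-1) ^ n * euclidCofactor Z n :=
    dvd_mul_add_neg_one_pow_mul_euclidCofactor hu fun i hi => h.eq_mul_add i (by omega)
  refine _root_.isResidueRecord_sub_mul (h.nonneg (2 * m + 1) hm.le) (hcofactor_pos (by omega)).le
    (hcofactor_pos hm.le) hz
    (mul_euclidCofactor_add_mul_euclidCofactor fun i hi => h.eq_mul_add i (hi.trans hm)) ?_ ?_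
  · simpa [pow_succ, sub_eq_add_neg] using hdvd hm.le
  · simpa [pow_succ] using hdvd (n := 2 * m + 2) hm

end IsEuclideanRun

/-- Lemma 9: for `b = r_{2k-1} - z·r_{2k}` with `2k ≤ t` and `0 ≤ z ≤ Z_{2k}-1`,
we have `⟨ub⟩_p < min_{0<n<b} ⟨un⟩_p`, whence `r_{2k-1} - z·r_{2k} ∈ D_Δ(p,u)`. -/
theorem stmt_9 (p u : ℤ) (hp : 3 ≤ p) (hpu : IsCoprime u p)
    (t : ℕ) (ht : 1 ≤ t) (r Z : ℕ → ℤ)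
    (hr0 : r 0 = p) (hr1pos : 0 < r 1) (hr1lt : r 1 < p) (hur1 : (u * r 1) % p = 1)
    (hrec : ∀ i, 1 ≤ i → i ≤ t →
      r (i - 1) = Z i * r i + r (i + 1) ∧ 0 ≤ r (i + 1) ∧ r (i + 1) < r i)
    (hrt : r t = 1)
    (k : ℕ) (hk1 : 1 ≤ k) (hk : 2 * k ≤ t) (z : ℤ) (hz0 : 0 ≤ z) (hz1 : z ≤ Z (2 * k) - 1)
    (b : ℤ) (hb : b = r (2 * k - 1) - z * r (2 * k)) :
    (∀ n : ℤ, 0 < n → n < b → (u * b) % p < (u * n) % p) ∧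
    r (2 * k - 1) - z * r (2 * k) ∈
      {d : ℤ | ∃ a' b' : ℤ, (a' < b' ∧ ∀ n : ℤ, a' < n → n < b' →
          max ((u * a') % p) ((u * b') % p) < (u * n) % p) ∧ d = b' - a'} := by
  have hrun : IsEuclideanRun r Z t :=
    { eq_mul_add := fun i hi => (hrec (i + 1) (by omega) hi).1
      nonneg := by
        rintro (_ | i) hi
        exacts [hr1pos.le, (hrec (i + 1) (by omega) hi).2.1]
      lt := by
        rintro (_ | i) hi
        exacts [hr0 ▸ hr1lt, (hrec (i + 1) (by omega) hi).2.2] }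
  obtain ⟨m, rfl⟩ : ∃ m, k = m + 1 := ⟨k - 1, by omega⟩
  have hu : r 0 ∣ u * r 1 - 1 := hr0 ▸ Int.dvd_self_sub_of_emod_eq hur1
  have hrecord : IsResidueRecord p u b := by
    rw [hb, ← hr0]
    exact hrun.isResidueRecord_sub_mul hu hk hz0
  have hbpos : 0 < b := hb ▸ hrun.sub_mul_pos (i := 2 * m + 1) hk (Int.lt_of_le_sub_one hz1)
  exact ⟨hrecord, hb ▸ hrecord.mem_residueGaps (by omega) hbpos⟩
end

section
/- (Theorem 1(i)) If q ≠ p + 1, then S_Δ(p,q) = N_Δ(p,q). If q = p + 1, then S_Δ(p,q) = N_Δ(p,q) ∪ {2} and 2 ∉ N_Δ(p,q). -/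
/-!
Write `S = ⟨p, q⟩` and `F = pq - p - q`. Every integer is `rq + sp` for a unique `0 ≤ r < p`,
and it lies in `S` iff `0 ≤ s`; since `F - m` has coordinates `(p - 1 - r, -1 - s)`, exactly one
of `m` and `F - m` lies in `S`. The reflection `m ↦ F - m` therefore maps the gaps of `S` onto
`S ∩ [0, F - 1]` and preserves the set of consecutive differences. As `F - 1 ∈ S`, `F ∉ S` and
`F + 1 ∈ S`, passing from `S ∩ [0, F - 1]` to `S ∩ [0, F + 1]` contributes just the difference `2`.
If `q ≠ p + 1`, the gaps `p - 1` and `p + 1` already give this difference. If `q = p + 1`,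
exchanging one `p` for a `q`, or conversely, shows that no nonzero element of `S` lies isolated
between two gaps.
-/

open Set

section ConsecutiveDiffs

/-- The differences `y - x` of consecutive elements `x < y` of `A`. -/
def consecutiveDiffs {α : Type*} [LT α] [Sub α] (A : Set α) : Set α :=
  {d | ∃ x ∈ A, ∃ y ∈ A, x < y ∧ (∀ z ∈ A, x < z → ¬ z < y) ∧ d = y - x}

theorem consecutiveDiffs_image_Icc {α : Type*} [Preorder α] [Sub α] {f : ℕ → α} {a b : ℕ}
    (hf : StrictMonoOn f (Icc a b)) :
    consecutiveDiffs (f '' Icc a b) = {d | ∃ j, a ≤ j ∧ j < b ∧ d = f (j + 1) - f j} := by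
  ext d
  constructor
  · rintro ⟨_, ⟨i, hi, rfl⟩, _, ⟨j, hj, rfl⟩, hij, hgap, rfl⟩
    have hij : i < j := (hf.lt_iff_lt hi hj).1 hij
    have hsucc : i + 1 ∈ Icc a b := ⟨hi.1.trans i.le_succ, hij.trans_le hj.2⟩
    have hle : ¬ i + 1 < j := fun h =>
      hgap _ (mem_image_of_mem f hsucc) (hf hi hsucc i.lt_succ_self) (hf hsucc hj h)
    obtain rfl : j = i + 1 := by omega
    exact ⟨i, hi.1, hij.trans_le hj.2, rfl⟩
  · rintro ⟨j, haj, hjb, rfl⟩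
    have hj : j ∈ Icc a b := ⟨haj, hjb.le⟩
    have hsucc : j + 1 ∈ Icc a b := ⟨haj.trans j.le_succ, hjb⟩
    refine ⟨f j, mem_image_of_mem f hj, f (j + 1), mem_image_of_mem f hsucc,
      hf hj hsucc j.lt_succ_self, ?_, rfl⟩
    rintro _ ⟨k, hk, rfl⟩ hjk hkj
    have := (hf.lt_iff_lt hj hk).1 hjk
    have := (hf.lt_iff_lt hk hsucc).1 hkj
    omega

theorem consecutiveDiffs_preimage_sub_left {α : Type*} [AddCommGroup α] [PartialOrder α]
    [IsOrderedAddMonoid α] (c : α) (A : Set α) :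
    consecutiveDiffs ((c - ·) ⁻¹' A) = consecutiveDiffs A := by
  have subset_preimage (B : Set α) :
      consecutiveDiffs B ⊆ consecutiveDiffs ((c - ·) ⁻¹' B) := by
    rintro _ ⟨x, hx, y, hy, hxy, hgap, rfl⟩
    refine ⟨c - y, by simpa using hy, c - x, by simpa using hx, sub_lt_sub_left hxy c, ?_, by simp⟩
    exact fun z hz hyz hzx => hgap (c - z) hz (lt_sub_comm.1 hzx) (sub_lt_comm.1 hyz)
  refine Subset.antisymm ?_ (subset_preimage A)
  simpa [preimage_preimage] using subset_preimage ((c - ·) ⁻¹' A)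

theorem consecutiveDiffs_insert_of_isGreatest {α : Type*} [PartialOrder α] [Sub α] {A : Set α}
    {x y : α} (hx : IsGreatest A x) (hxy : x < y) :
    consecutiveDiffs (insert y A) = insert (y - x) (consecutiveDiffs A) := by
  have lt_y {z : α} (hz : z ∈ A) : z < y := (hx.2 hz).trans_lt hxy
  ext d
  constructor
  · rintro ⟨u, hu, v, rfl | hv, huv, hgap, rfl⟩
    · have hu : u ∈ A := hu.resolve_left huv.ne
      obtain rfl : u = x := by
        by_contra hne
        exact hgap x (.inr hx.1) ((hx.2 hu).lt_of_ne hne) hxy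
      exact .inl rfl
    · have hu : u ∈ A := hu.resolve_left (huv.trans (lt_y hv)).ne
      exact .inr ⟨u, hu, v, hv, huv, fun z hz => hgap z (.inr hz), rfl⟩
  · rintro (rfl | ⟨u, hu, v, hv, huv, hgap, rfl⟩)
    · refine ⟨x, .inr hx.1, y, .inl rfl, hxy, ?_, rfl⟩
      rintro z (rfl | hz) hxz hzy
      · exact lt_irrefl _ hzy
      · exact (hx.2 hz).not_gt hxz
    · refine ⟨u, .inr hu, v, .inr hv, huv, ?_, rfl⟩
      rintro z (rfl | hz) huz hzv
      · exact (lt_y hv).asymm hzv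
      · exact hgap z hz huz hzv

end ConsecutiveDiffs

section SymmetricSemigroup

/-- The gaps of a numerical semigroup `S`, that is, the positive integers outside it. -/
def gaps (S : AddSubmonoid ℤ) : Set ℤ := {m | 0 < m ∧ m ∉ S}

/-- `S` is a symmetric numerical semigroup with Frobenius number `F`. Semigroups are taken inside
`ℤ` rather than `ℕ`, so that `m ↦ F - m` is an involution. -/
structure IsSymmetricSemigroup (S : AddSubmonoid ℤ) (F : ℤ) : Prop where
  nonneg : ∀ m ∈ S, 0 ≤ m
  notMem_iff : ∀ m, m ∉ S ↔ F - m ∈ S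

namespace IsSymmetricSemigroup

variable {S : AddSubmonoid ℤ} {F : ℤ}

theorem frobenius_notMem (h : IsSymmetricSemigroup S F) : F ∉ S :=
  (h.notMem_iff F).2 (by simp)

theorem mem_of_frobenius_lt (h : IsSymmetricSemigroup S F) {m : ℤ} (hm : F < m) : m ∈ S := by
  by_contra hmS
  have := h.nonneg _ ((h.notMem_iff m).1 hmS)
  omega

theorem gaps_eq_preimage (h : IsSymmetricSemigroup S F) :
    gaps S = (F - ·) ⁻¹' (S ∩ Icc 0 (F - 1)) := by
  ext m
  simp only [gaps, mem_ofPred_eq, mem_preimage, mem_inter_iff, SetLike.mem_coe, mem_Icc]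
  constructor
  · rintro ⟨hm, hmS⟩
    have hFm := (h.notMem_iff m).1 hmS
    exact ⟨hFm, h.nonneg _ hFm, by omega⟩
  · rintro ⟨hFm, -, hle⟩
    exact ⟨by omega, (h.notMem_iff m).2 hFm⟩

theorem isGreatest_frobenius_sub_one (h : IsSymmetricSemigroup S F) (h1 : 1 ∉ S) :
    IsGreatest (S ∩ Icc 0 (F - 1)) (F - 1) := by
  have hF := (h.notMem_iff 1).1 h1
  exact ⟨⟨hF, h.nonneg _ hF, le_rfl⟩, fun _ hm => hm.2.2⟩

theorem inter_Icc_frobenius_add_one (h : IsSymmetricSemigroup S F) :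
    (S ∩ Icc 0 (F + 1) : Set ℤ) = insert (F + 1) (S ∩ Icc 0 (F - 1) : Set ℤ) := by
  have hF : F + 1 ∈ S := h.mem_of_frobenius_lt (by omega)
  ext m
  constructor
  · rintro ⟨hmS, h0, hle⟩
    have : m ≠ F := fun hmF => h.frobenius_notMem (hmF ▸ hmS)
    by_cases hm : m = F + 1
    · exact .inl hm
    · exact .inr ⟨hmS, h0, by omega⟩
  · rintro (rfl | ⟨hmS, h0, hle⟩)
    · exact ⟨hF, h.nonneg _ hF, le_rfl⟩
    · exact ⟨hmS, h0, by omega⟩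

theorem consecutiveDiffs_inter_Icc (h : IsSymmetricSemigroup S F) (h1 : 1 ∉ S) :
    consecutiveDiffs (S ∩ Icc 0 (F + 1) : Set ℤ) = consecutiveDiffs (gaps S) ∪ {2} := by
  have hmax := h.isGreatest_frobenius_sub_one h1
  rw [h.inter_Icc_frobenius_add_one, consecutiveDiffs_insert_of_isGreatest hmax (by omega),
    h.gaps_eq_preimage, consecutiveDiffs_preimage_sub_left, union_singleton]
  congr 1
  ring

end IsSymmetricSemigroup

theorem two_mem_consecutiveDiffs_gaps_iff {S : AddSubmonoid ℤ} :
    2 ∈ consecutiveDiffs (gaps S) ↔ ∃ m ∈ S, 1 < m ∧ m - 1 ∉ S ∧ m + 1 ∉ S := by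
  constructor
  · rintro ⟨x, ⟨hx0, hxS⟩, y, ⟨-, hyS⟩, -, hgap, hd⟩
    obtain rfl : y = x + 1 + 1 := by omega
    refine ⟨x + 1, ?_, by omega, by simpa using hxS, hyS⟩
    by_contra hS
    exact hgap (x + 1) ⟨by omega, hS⟩ (by omega) (by omega)
  · rintro ⟨m, hmS, hm, hpred, hsucc⟩
    refine ⟨m - 1, ⟨by omega, hpred⟩, m + 1, ⟨by omega, hsucc⟩, by omega, ?_, by ring⟩
    rintro z ⟨-, hzS⟩ hlt hgt
    obtain rfl : z = m := by omega
    exact hzS hmS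

end SymmetricSemigroup

section PairSemigroup

/-- The semigroup `⟨p, q⟩` generated by `p` and `q`. -/
abbrev pairSemigroup (p q : ℤ) : AddSubmonoid ℤ := AddSubmonoid.closure {p, q}

variable {p q : ℤ}

theorem mem_pairSemigroup_iff {m : ℤ} :
    m ∈ pairSemigroup p q ↔ ∃ a b : ℤ, 0 ≤ a ∧ 0 ≤ b ∧ m = a * q + b * p := by
  rw [AddSubmonoid.mem_closure_pair]
  constructor
  · rintro ⟨b, a, rfl⟩
    exact ⟨a, b, by positivity, by positivity, by simp [add_comm]⟩
  · rintro ⟨a, b, ha, hb, rfl⟩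
    lift a to ℕ using ha
    lift b to ℕ using hb
    exact ⟨b, a, by simp [add_comm]⟩

theorem nonneg_of_mem_pairSemigroup (hp : 0 ≤ p) (hq : 0 ≤ q) {m : ℤ}
    (hm : m ∈ pairSemigroup p q) : 0 ≤ m := by
  obtain ⟨a, b, ha, hb, rfl⟩ := mem_pairSemigroup_iff.1 hm
  positivity

theorem exists_eq_mul_add_mul_of_isCoprime (hcop : IsCoprime p q) (hp : 0 < p) (m : ℤ) :
    ∃ r s : ℤ, 0 ≤ r ∧ r < p ∧ m = r * q + s * p := by
  obtain ⟨u, v, huv⟩ := hcop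
  refine ⟨m * v % p, m * u + m * v / p * q, Int.emod_nonneg _ hp.ne', Int.emod_lt_of_pos _ hp, ?_⟩
  linear_combination (-m) * huv - q * Int.emod_add_mul_ediv (m * v) p

theorem mul_add_mul_mem_pairSemigroup_iff (hq : 0 ≤ q) (hcop : IsCoprime p q) {r s : ℤ}
    (hr : 0 ≤ r) (hrp : r < p) : r * q + s * p ∈ pairSemigroup p q ↔ 0 ≤ s := by
  refine ⟨fun hmem => ?_, fun hs => mem_pairSemigroup_iff.2 ⟨r, s, hr, hs, rfl⟩⟩
  obtain ⟨a, b, ha, hb, hab⟩ := mem_pairSemigroup_iff.1 hmem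
  obtain ⟨k, hk⟩ : p ∣ a - r :=
    hcop.dvd_of_dvd_mul_right ⟨s - b, by linear_combination -hab⟩
  have hp : 0 < p := by omega
  have hk0 : 0 ≤ k := by
    by_contra! hneg
    nlinarith
  have hs : s = b + k * q := mul_right_cancel₀ hp.ne' (by linear_combination hab + q * hk)
  rw [hs]
  positivity

theorem isSymmetricSemigroup_pairSemigroup (hp : 0 < p) (hq : 0 ≤ q) (hcop : IsCoprime p q) :
    IsSymmetricSemigroup (pairSemigroup p q) (p * q - p - q) where
  nonneg _ := nonneg_of_mem_pairSemigroup hp.le hq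
  notMem_iff m := by
    obtain ⟨r, s, hr, hrp, rfl⟩ := exists_eq_mul_add_mul_of_isCoprime hcop hp m
    have hreflect : p * q - p - q - (r * q + s * p) = (p - 1 - r) * q + (-1 - s) * p := by ring
    rw [hreflect, mul_add_mul_mem_pairSemigroup_iff hq hcop hr hrp,
      mul_add_mul_mem_pairSemigroup_iff hq hcop (by omega) (by omega)]
    omega

theorem eq_zero_or_eq_of_mem_pairSemigroup_of_lt (hp : 0 ≤ p) (hq : 0 ≤ q)
    {m : ℤ} (hm : m ∈ pairSemigroup p q) (hmq : m < q) (hmp : m < 2 * p) : m = 0 ∨ m = p := by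
  obtain ⟨a, b, ha, hb, rfl⟩ := mem_pairSemigroup_iff.1 hm
  have hbp : 0 ≤ b * p := by positivity
  obtain rfl : a = 0 := by
    by_contra hne
    have : 1 ≤ a := by omega
    nlinarith
  have hb2 : b < 2 := by
    by_contra! hb2
    nlinarith
  interval_cases b <;> simp

theorem sub_one_mem_or_add_one_mem_of_mem_pairSemigroup {m : ℤ}
    (hm : m ∈ pairSemigroup p (p + 1)) (hm0 : m ≠ 0) :
    m - 1 ∈ pairSemigroup p (p + 1) ∨ m + 1 ∈ pairSemigroup p (p + 1) := by
  simp only [mem_pairSemigroup_iff] at hm ⊢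
  obtain ⟨a, b, ha, hb, rfl⟩ := hm
  rcases ha.eq_or_lt with rfl | ha
  · have : b ≠ 0 := by
      rintro rfl
      simp at hm0
    exact .inr ⟨1, b - 1, by omega, by omega, by ring⟩
  · exact .inl ⟨a - 1, b + 1, by omega, by omega, by ring⟩

theorem two_mem_consecutiveDiffs_gaps_pairSemigroup_iff (hp : 1 < p) (hpq : p < q) :
    2 ∈ consecutiveDiffs (gaps (pairSemigroup p q)) ↔ q ≠ p + 1 := by
  rw [two_mem_consecutiveDiffs_gaps_iff]
  constructor
  · rintro ⟨m, hm, hm1, hpred, hsucc⟩ rfl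
    exact (sub_one_mem_or_add_one_mem_of_mem_pairSemigroup hm (by omega)).elim hpred hsucc
  · intro hne
    have notMem {m : ℤ} (hm : 0 < m) (hmp : m ≠ p) (hm_le : m ≤ p + 1) :
        m ∉ pairSemigroup p q := by
      intro hmem
      have := eq_zero_or_eq_of_mem_pairSemigroup_of_lt (by omega) (by omega) hmem (by omega)
        (by omega)
      omega
    exact ⟨p, AddSubmonoid.subset_closure (by simp), hp,
      notMem (by omega) (by omega) (by omega), notMem (by omega) (by omega) le_rfl⟩

theorem consecutiveDiffs_pairSemigroup_inter_Icc (hp : 1 < p) (hq : 1 < q)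
    (hcop : IsCoprime p q) :
    consecutiveDiffs ((pairSemigroup p q : Set ℤ) ∩ Icc 0 ((p - 1) * (q - 1))) =
      consecutiveDiffs (gaps (pairSemigroup p q)) ∪ {2} := by
  have h1 : 1 ∉ pairSemigroup p q := by
    intro hmem
    have := eq_zero_or_eq_of_mem_pairSemigroup_of_lt (by omega) (by omega) hmem hq (by omega)
    omega
  have hφ : (p - 1) * (q - 1) = p * q - p - q + 1 := by ring
  rw [hφ]
  have hsymm := isSymmetricSemigroup_pairSemigroup (by omega) (by omega) hcop
  exact hsymm.consecutiveDiffs_inter_Icc h1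

end PairSemigroup

/-- Theorem 1(i): unless `q = p + 1` we have `S_Δ(p,q) = N_Δ(p,q)`; for `q = p + 1`
we have `S_Δ(p,q) = N_Δ(p,q) ∪ {2}` and `2 ∉ N_Δ(p,q)`.  Here `ℓ₀ < ℓ₁ < ⋯ < ℓ_θ`
enumerates `S(p,q) = ⟨p,q⟩ ∩ [0,(p-1)(q-1)]`, `n₁ < ⋯ < n_θ` enumerates the positive
integers not in `⟨p,q⟩`, `S_Δ = {ℓ_{j+1} - ℓ_j}` and `N_Δ = {n_{j+1} - n_j}`. -/
theorem stmt_12 (p q : ℤ) (hp : 3 ≤ p) (hpq : p < q) (hcop : IsCoprime p q)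
    (θ : ℕ) (hθ : (θ : ℤ) * 2 = (p - 1) * (q - 1))
    (ℓ : ℕ → ℤ)
    (hℓmem : ∀ j : ℕ, j ≤ θ →
      (∃ a b : ℤ, 0 ≤ a ∧ 0 ≤ b ∧ ℓ j = a * q + b * p) ∧
      0 ≤ ℓ j ∧ ℓ j ≤ (p - 1) * (q - 1))
    (hℓsurj : ∀ m : ℤ, (∃ a b : ℤ, 0 ≤ a ∧ 0 ≤ b ∧ m = a * q + b * p) →
      0 ≤ m → m ≤ (p - 1) * (q - 1) → ∃ j : ℕ, j ≤ θ ∧ ℓ j = m)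
    (hℓmono : ∀ i j : ℕ, i < j → j ≤ θ → ℓ i < ℓ j)
    (nn : ℕ → ℤ)
    (hnmem : ∀ j : ℕ, 1 ≤ j → j ≤ θ →
      0 < nn j ∧ ¬ (∃ a b : ℤ, 0 ≤ a ∧ 0 ≤ b ∧ nn j = a * q + b * p))
    (hnsurj : ∀ m : ℤ, 0 < m → ¬ (∃ a b : ℤ, 0 ≤ a ∧ 0 ≤ b ∧ m = a * q + b * p) →
      ∃ j : ℕ, 1 ≤ j ∧ j ≤ θ ∧ nn j = m)
    (hnmono : ∀ i j : ℕ, 1 ≤ i → i < j → j ≤ θ → nn i < nn j) :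
    (q ≠ p + 1 →
      {d : ℤ | ∃ j : ℕ, j < θ ∧ d = ℓ (j + 1) - ℓ j} =
      {d : ℤ | ∃ j : ℕ, 1 ≤ j ∧ j < θ ∧ d = nn (j + 1) - nn j}) ∧
    (q = p + 1 →
      {d : ℤ | ∃ j : ℕ, j < θ ∧ d = ℓ (j + 1) - ℓ j} =
      {d : ℤ | ∃ j : ℕ, 1 ≤ j ∧ j < θ ∧ d = nn (j + 1) - nn j} ∪ {2} ∧
      (2 : ℤ) ∉ {d : ℤ | ∃ j : ℕ, 1 ≤ j ∧ j < θ ∧ d = nn (j + 1) - nn j}) := by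
  simp only [← mem_pairSemigroup_iff] at hℓmem hℓsurj hnmem hnsurj
  have hℓimage : ℓ '' Icc 0 θ = (pairSemigroup p q : Set ℤ) ∩ Icc 0 ((p - 1) * (q - 1)) := by
    refine Subset.antisymm (image_subset_iff.2 fun j hj => hℓmem j hj.2) fun m hm => ?_
    obtain ⟨j, hj, hjm⟩ := hℓsurj m hm.1 hm.2.1 hm.2.2
    exact ⟨j, ⟨j.zero_le, hj⟩, hjm⟩
  have hnimage : nn '' Icc 1 θ = gaps (pairSemigroup p q) := by
    refine Subset.antisymm (image_subset_iff.2 fun j hj => hnmem j hj.1 hj.2) fun m hm => ?_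
    obtain ⟨j, h1j, hj, hjm⟩ := hnsurj m hm.1 hm.2
    exact ⟨j, ⟨h1j, hj⟩, hjm⟩
  have hSΔ := consecutiveDiffs_image_Icc (f := ℓ) (a := 0) (b := θ)
    fun i _ j hj hij => hℓmono i j hij hj.2
  have hNΔ := consecutiveDiffs_image_Icc (f := nn) (a := 1) (b := θ)
    fun i hi j hj hij => hnmono i j hi.1 hij hj.2
  simp only [zero_le, true_and] at hSΔ
  rw [← hSΔ, ← hNΔ, hℓimage, hnimage,
    consecutiveDiffs_pairSemigroup_inter_Icc (by omega) (by omega) hcop]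
  have htwo := two_mem_consecutiveDiffs_gaps_pairSemigroup_iff (by omega : 1 < p) hpq
  exact ⟨fun hne => union_eq_left.2 (singleton_subset_iff.2 (htwo.2 hne)),
    fun heq => ⟨rfl, fun hmem => htwo.1 hmem heq⟩⟩
end

section
/- Let u be the multiplicative inverse of q modulo p with 0 < u < p. For every nonnegative integer n, write n uniquely (by the Chinese remainder theorem) as n = x_n·q + y_n·p + δ_n·pq with 0 ≤ x_n < p, 0 ≤ y_n < q and δ_n ∈ ℤ. Then x_n = ⟨n·u⟩_p, and n ∈ ⟨p,q⟩ if and only if ⟨n·u⟩_p ≤ ⌊n/q⌋. -/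
/-!
If `n = a * q + b * p`, then multiplying by `u` shows `a ≡ n * u` modulo `p`, and conversely every
such `a` is the `q`-coefficient of an integer combination equal to `n`. The remainder
`r = n * u % p` is the least nonnegative choice of `a`, so it leaves the largest coefficient of
`p`, and `n` lies in the semigroup exactly when that coefficient, `(n - r * q) / p`, is nonnegative.
-/

section

variable {p q u n x y : ℤ}

theorem mul_inverse_modEq_iff_modEq_mul (hqu : q * u ≡ 1 [ZMOD p]) :
    n * u ≡ x [ZMOD p] ↔ n ≡ x * q [ZMOD p] where
  mp h := calc
    n = n * 1 := (mul_one n).symm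
    _ ≡ n * (q * u) [ZMOD p] := hqu.symm.mul_left n
    _ = n * u * q := by ring
    _ ≡ x * q [ZMOD p] := h.mul_right q
  mpr h := calc
    n * u ≡ x * q * u [ZMOD p] := h.mul_right u
    _ = x * (q * u) := mul_assoc x q u
    _ ≡ x * 1 [ZMOD p] := hqu.mul_left x
    _ = x := mul_one x

theorem mul_inverse_modEq_of_eq_add (hqu : q * u ≡ 1 [ZMOD p]) (hn : n = x * q + y * p) :
    n * u ≡ x [ZMOD p] :=
  (mul_inverse_modEq_iff_modEq_mul hqu).2 <| hn ▸ Int.add_mul_emod_self_right (x * q) y p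

theorem eq_mul_inverse_emod_of_eq_add (hqu : q * u ≡ 1 [ZMOD p]) (hx : 0 ≤ x) (hxp : x < p)
    (hn : n = x * q + y * p) : x = n * u % p :=
  calc
    x = x % p := (Int.emod_eq_of_lt hx hxp).symm
    _ = n * u % p := (mul_inverse_modEq_of_eq_add hqu hn).symm

theorem exists_nonneg_eq_add_iff_emod_mul_le (hp : 0 < p) (hq : 0 ≤ q)
    (hqu : q * u ≡ 1 [ZMOD p]) :
    (∃ a b : ℤ, 0 ≤ a ∧ 0 ≤ b ∧ n = a * q + b * p) ↔ n * u % p * q ≤ n := by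
  constructor
  · rintro ⟨a, b, ha, hb, hn⟩
    have remainder_le : n * u % p ≤ a := calc
      n * u % p = a % p := mul_inverse_modEq_of_eq_add hqu hn
      _ = a - p * (a / p) := Int.emod_def a p
      _ ≤ a := sub_le_self a (mul_nonneg hp.le (Int.ediv_nonneg ha hp.le))
    calc
      n * u % p * q ≤ a * q := mul_le_mul_of_nonneg_right remainder_le hq
      _ ≤ a * q + b * p := le_add_of_nonneg_right (mul_nonneg hb hp.le)
      _ = n := hn.symm
  · intro hle
    have hmod : n * u % p * q ≡ n [ZMOD p] :=
      ((mul_inverse_modEq_iff_modEq_mul hqu).1 (Int.mod_modEq _ _).symm).symm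
    obtain ⟨b, hb⟩ : p ∣ n - n * u % p * q := hmod.dvd
    have b_nonneg : 0 ≤ b := nonneg_of_mul_nonneg_right (hb ▸ sub_nonneg.2 hle) hp
    exact ⟨n * u % p, b, Int.emod_nonneg _ hp.ne', b_nonneg, by linear_combination hb⟩

end

theorem stmt_15_general {p q u : ℤ} (hp : 0 < p) (hq : 0 < q) (hqu : q * u ≡ 1 [ZMOD p]) (n : ℤ) :
    (∀ x y : ℤ, 0 ≤ x → x < p → n = x * q + y * p → x = n * u % p) ∧
      ((∃ a b : ℤ, 0 ≤ a ∧ 0 ≤ b ∧ n = a * q + b * p) ↔ n * u % p ≤ n / q) :=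
  ⟨fun _ _ ↦ eq_mul_inverse_emod_of_eq_add hqu,
    (exists_nonneg_eq_add_iff_emod_mul_le hp hq.le hqu).trans (Int.le_ediv_iff_mul_le hq).symm⟩

/-- Lemma 13: with `u` the inverse of `q` mod `p`, if a nonnegative integer `n` is
written (uniquely, by CRT) as `n = x·q + y·p + δ·pq` with `0 ≤ x < p`, `0 ≤ y < q`,
then `x = ⟨n·u⟩_p`; moreover `n ∈ ⟨p,q⟩` iff `⟨n·u⟩_p ≤ ⌊n/q⌋`. -/
theorem stmt_15 (p q : ℤ) (hp : 3 ≤ p) (hpq : p < q) (hcop : IsCoprime p q)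
    (u : ℤ) (hu0 : 0 < u) (hup : u < p) (huq : (q * u) % p = 1) :
    ∀ n : ℤ, 0 ≤ n →
      (∀ x y δ : ℤ, 0 ≤ x → x < p → 0 ≤ y → y < q →
        n = x * q + y * p + δ * (p * q) → x = (n * u) % p) ∧
      ((∃ a b : ℤ, 0 ≤ a ∧ 0 ≤ b ∧ n = a * q + b * p) ↔ (n * u) % p ≤ n / q) := by
  intro n _
  have hqu : q * u ≡ 1 [ZMOD p] := huq.trans (Int.emod_eq_of_lt zero_le_one (by lia)).symm
  exact (stmt_15_general (by lia) (by lia) hqu n).imp_left fun coefficient x y δ hx hxp _ _ hn ↦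
    coefficient x (y + δ * q) hx hxp (by linear_combination hn)
end

section
/- Let u = x₁ be the multiplicative inverse of q modulo p with 0 < u < p. Then S_Δ(p,q) ⊆ D_Δ(p,u); that is, for every pair of consecutive elements (ℓ_j, ℓ_{j+1}) of S(p,q), the difference ℓ_{j+1} − ℓ_j equals b − a for some pair (a,b) satisfying condition (4). -/
/-!
Write `r n` for the residue of `u * n` modulo `p`. Since `u` inverts `q`, an element
`a * q + b * p` of the semigroup has `r = a mod p`; hence `n` lies in the semigroup exactly when
`r n * q ≤ n`. For consecutive elements `x < y` the pair `(x, y)` itself satisfies condition (4):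
if `x < n < y` then `r x * q ≤ x < n < r n * q`, so `r x < r n`; moreover `y ≤ x + q` gives
`r y * q ≤ y < n + q < (r n + 1) * q`, so `r y ≤ r n`, and equality would force `p ∣ y - n`, which
is impossible because `y ≤ x + p < n + p`.
-/

/-- The numerical semigroup `⟨p, q⟩`, as a submonoid of `ℤ` so that its elements can be compared
with residues without coercions. -/
def numericalSemigroup (p q : ℤ) : AddSubmonoid ℤ :=
  AddSubmonoid.closure {p, q}

/-- Condition (4), i.e. `(a, b) ∈ D(p, u)`: the residues of `u * n` modulo `p` strictly between
`a` and `b` exceed those at both endpoints. -/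
def IsResidueArch (p u a b : ℤ) : Prop :=
  a < b ∧ ∀ n : ℤ, a < n → n < b → max ((u * a) % p) ((u * b) % p) < (u * n) % p

theorem map_succ_le_of_map_lt {α β : Type*} [LinearOrder α] [SuccOrder α] [Preorder β] {f : α → β}
    {s : Set α} (hf : StrictMonoOn f s) {a b : α} (ha : a ∈ s) (hsa : Order.succ a ∈ s)
    (hb : b ∈ s) (hab : f a < f b) : f (Order.succ a) ≤ f b :=
  (hf.le_iff_le hsa hb).2 (Order.succ_le_of_lt ((hf.lt_iff_lt ha hb).1 hab))

section

variable {p q u m n x y : ℤ}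

theorem emod_mul_modEq_self (hqu : q * u ≡ 1 [ZMOD p]) (n : ℤ) : u * n % p * q ≡ n [ZMOD p] :=
  calc u * n % p * q ≡ u * n * q [ZMOD p] := (Int.mod_modEq _ _).mul_right q
    _ = q * u * n := by ring
    _ ≡ 1 * n [ZMOD p] := hqu.mul_right n
    _ = n := one_mul n

theorem modEq_of_emod_mul_eq (hqu : q * u ≡ 1 [ZMOD p]) (h : u * m % p = u * n % p) :
    m ≡ n [ZMOD p] :=
  calc m ≡ u * m % p * q [ZMOD p] := (emod_mul_modEq_self hqu m).symm
    _ = u * n % p * q := by rw [h]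
    _ ≡ n [ZMOD p] := emod_mul_modEq_self hqu n

namespace numericalSemigroup

theorem left_mem : p ∈ numericalSemigroup p q :=
  AddSubmonoid.subset_closure (Set.mem_insert p {q})

theorem right_mem : q ∈ numericalSemigroup p q :=
  AddSubmonoid.subset_closure (Set.mem_insert_of_mem p rfl)

theorem mem_iff :
    m ∈ numericalSemigroup p q ↔ ∃ a b : ℤ, 0 ≤ a ∧ 0 ≤ b ∧ m = a * q + b * p := by
  rw [numericalSemigroup, AddSubmonoid.mem_closure_pair]
  constructor
  · rintro ⟨b, a, rfl⟩
    exact ⟨a, b, a.cast_nonneg, b.cast_nonneg, by simp only [nsmul_eq_mul, add_comm]⟩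
  · rintro ⟨a, b, ha, hb, rfl⟩
    lift a to ℕ using ha
    lift b to ℕ using hb
    exact ⟨b, a, by simp only [nsmul_eq_mul, add_comm]⟩

theorem nonneg_of_mem (hp : 0 ≤ p) (hq : 0 ≤ q) (hm : m ∈ numericalSemigroup p q) : 0 ≤ m := by
  obtain ⟨a, b, ha, hb, rfl⟩ := mem_iff.1 hm
  positivity

theorem mem_iff_emod_mul_le (hp : 0 < p) (hq : 0 ≤ q) (hqu : q * u ≡ 1 [ZMOD p]) :
    m ∈ numericalSemigroup p q ↔ (u * m) % p * q ≤ m := by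
  rw [mem_iff]
  constructor
  · rintro ⟨a, b, ha, hb, rfl⟩
    have residue_eq : u * (a * q + b * p) ≡ a [ZMOD p] :=
      calc u * (a * q + b * p) = q * u * a + p * (u * b) := by ring
        _ ≡ q * u * a [ZMOD p] := Int.modEq_add_fac_self
        _ ≡ 1 * a [ZMOD p] := hqu.mul_right a
        _ = a := one_mul a
    have emod_le_self : a % p ≤ a :=
      Int.emod_def a p ▸ sub_le_self a (mul_nonneg hp.le (Int.ediv_nonneg ha hp.le))
    calc u * (a * q + b * p) % p * q = a % p * q := by rw [residue_eq]
      _ ≤ a * q := by gcongr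
      _ ≤ a * q + b * p := le_add_of_nonneg_right (by positivity)
  · intro hle
    obtain ⟨b, hb⟩ := (emod_mul_modEq_self hqu m).dvd
    have b_nonneg : 0 ≤ b := nonneg_of_mul_nonneg_right (hb ▸ sub_nonneg.2 hle) hp
    exact ⟨u * m % p, b, Int.emod_nonneg _ hp.ne', b_nonneg, by linear_combination hb⟩

theorem isResidueArch_of_consecutive (hp : 0 < p) (hq : 0 < q) (hqu : q * u ≡ 1 [ZMOD p])
    (hx : x ∈ numericalSemigroup p q) (hy : y ∈ numericalSemigroup p q) (hxy : x < y)
    (hnext : ∀ m ∈ numericalSemigroup p q, x < m → y ≤ m) : IsResidueArch p u x y := by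
  refine ⟨hxy, fun n hxn hny ↦ ?_⟩
  have y_le_add_p : y ≤ x + p := hnext _ (add_mem hx left_mem) (by linarith)
  have y_le_add_q : y ≤ x + q := hnext _ (add_mem hx right_mem) (by linarith)
  have x_bound : u * x % p * q ≤ x := (mem_iff_emod_mul_le hp hq.le hqu).1 hx
  have y_bound : u * y % p * q ≤ y := (mem_iff_emod_mul_le hp hq.le hqu).1 hy
  have n_bound : n < u * n % p * q := by
    by_contra! hle
    exact hny.not_ge (hnext n ((mem_iff_emod_mul_le hp hq.le hqu).2 hle) hxn)
  have residue_x_lt : u * x % p < u * n % p := lt_of_mul_lt_mul_right (by linarith) hq.le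
  have residue_y_le : u * y % p ≤ u * n % p :=
    Int.lt_add_one_iff.1 (lt_of_mul_lt_mul_right (by linarith) hq.le)
  have residue_y_ne : u * y % p ≠ u * n % p := fun h ↦ by
    have p_le_sub : p ≤ y - n :=
      Int.le_of_dvd (sub_pos.2 hny) (modEq_of_emod_mul_eq hqu h.symm).dvd
    linarith
  exact max_lt residue_x_lt (residue_y_le.lt_of_ne residue_y_ne)

end numericalSemigroup

end

theorem stmt_16_general {p q u : ℤ} (hp : 0 < p) (hq : 0 < q) (hqu : q * u ≡ 1 [ZMOD p])
    {θ : ℕ} {ℓ : ℕ → ℤ} (hmem : ∀ j ≤ θ, ℓ j ∈ numericalSemigroup p q)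
    (hsurj : ∀ m ∈ numericalSemigroup p q, m ≤ ℓ θ → ∃ j ≤ θ, ℓ j = m)
    (hmono : StrictMonoOn ℓ (Set.Iic θ)) {j : ℕ} (hj : j < θ) :
    IsResidueArch p u (ℓ j) (ℓ (j + 1)) := by
  have lt_succ : ℓ j < ℓ (j + 1) := hmono hj.le hj j.lt_succ_self
  refine numericalSemigroup.isResidueArch_of_consecutive hp hq hqu (hmem j hj.le)
    (hmem (j + 1) hj) lt_succ fun m hm hlt ↦ ?_
  rcases le_total m (ℓ θ) with hle | hge
  · obtain ⟨i, hi, rfl⟩ := hsurj m hm hle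
    exact map_succ_le_of_map_lt hmono hj.le hj hi hlt
  · exact (hmono.monotoneOn hj Set.self_mem_Iic hj).trans hge

/-- Lemma 14: with `u = x₁` the inverse of `q` mod `p`, `S_Δ(p,q) ⊆ D_Δ(p,u)`:
every difference `ℓ_{j+1} - ℓ_j` of consecutive elements of `S(p,q)` equals `b - a`
for some pair `(a,b)` satisfying condition (4). -/
theorem stmt_16 (p q : ℤ) (hp : 3 ≤ p) (hpq : p < q) (hcop : IsCoprime p q)
    (θ : ℕ) (hθ : (θ : ℤ) * 2 = (p - 1) * (q - 1))
    (ℓ : ℕ → ℤ)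
    (hℓmem : ∀ j : ℕ, j ≤ θ →
      (∃ a b : ℤ, 0 ≤ a ∧ 0 ≤ b ∧ ℓ j = a * q + b * p) ∧
      0 ≤ ℓ j ∧ ℓ j ≤ (p - 1) * (q - 1))
    (hℓsurj : ∀ m : ℤ, (∃ a b : ℤ, 0 ≤ a ∧ 0 ≤ b ∧ m = a * q + b * p) →
      0 ≤ m → m ≤ (p - 1) * (q - 1) → ∃ j : ℕ, j ≤ θ ∧ ℓ j = m)
    (hℓmono : ∀ i j : ℕ, i < j → j ≤ θ → ℓ i < ℓ j)
    (u : ℤ) (hu0 : 0 < u) (hup : u < p) (huq : (q * u) % p = 1) :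
    ∀ j : ℕ, j < θ →
      ∃ a b : ℤ, a < b ∧
        (∀ n : ℤ, a < n → n < b → max ((u * a) % p) ((u * b) % p) < (u * n) % p) ∧
        b - a = ℓ (j + 1) - ℓ j := by
  have hqu : q * u ≡ 1 [ZMOD p] := huq.trans (Int.emod_eq_of_lt one_pos.le (by linarith)).symm
  simp only [← numericalSemigroup.mem_iff] at hℓmem hℓsurj
  have exists_index (m : ℤ) (hm : m ∈ numericalSemigroup p q) (hle : m ≤ ℓ θ) :
      ∃ j ≤ θ, ℓ j = m :=
    hℓsurj m hm (numericalSemigroup.nonneg_of_mem (by linarith) (by linarith) hm)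
      (hle.trans (hℓmem θ le_rfl).2.2)
  intro j hj
  obtain ⟨lt, arch⟩ := stmt_16_general (by linarith) (by linarith) hqu
    (fun i hi ↦ (hℓmem i hi).1) exists_index (fun i _ k hk hik ↦ hℓmono i k hik hk) hj
  exact ⟨ℓ j, ℓ (j + 1), lt, arch, rfl⟩
end
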